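/- Suppose 0 < 1/n ≪ ε ≪ 1/t, 1/k with k, t ∈ ℕ∖{1}, 0 < η < 1, and a ∈ ℕ^{k−1}. Suppose P = P(k−1, a) is an (η, ε, a)-equitable family of partitions on a vertex set V with |V| = n. Suppose b ∈ [t]^{k−1} and a_i divides b_i for all i ∈ [k−1]. Then there exists a family of partitions Q = Q(k−1, b) on V which is (η, ε^{1/3}, b)-equitable and satisfies Q ≺ P. -/

import Mathlib

namespace HypReg

open Finset

attribute [local instance 10] Classical.propDecidable

noncomputable section

variable {V : Type*} [DecidableEq V]

/-- Representation of a 1-graph: the set of singletons of `U`. -/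
def sing (U : Finset V) : Finset (Finset V) :=
  U.image fun v => ({v} : Finset V)

/-- `Kset W j i B`: the i-element subsets of `W` all of whose j-element subsets lie in `B`. -/
def Kset (W : Finset V) (j i : ℕ) (B : Finset (Finset V)) : Finset (Finset V) :=
  (W.powersetCard i).filter fun S => ∀ T ∈ S.powersetCard j, T ∈ B

/-- Clique operator which, at level 1, uses the ambient family `cr` of crossing i-sets. -/
def KsetC (W : Finset V) (cr : Finset (Finset V)) (j i : ℕ) (B : Finset (Finset V)) :
    Finset (Finset V) :=
  if j = 1 then cr.filter fun S => ∀ v ∈ S, ({v} : Finset V) ∈ B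
  else Kset W j i B

/-- `A` (a (j+1)-graph) is (ε,d)-regular with respect to the j-graph `B` (plain clique sets). -/
def RegPair (W : Finset V) (j : ℕ) (ε d : ℝ) (A B : Finset (Finset V)) : Prop :=
  ∀ Q ⊆ B, ε * ((Kset W j (j+1) B).card : ℝ) ≤ ((Kset W j (j+1) Q).card : ℝ) →
    |((A ∩ Kset W j (j+1) Q).card : ℝ) - d * ((Kset W j (j+1) Q).card : ℝ)|
      ≤ ε * ((Kset W j (j+1) Q).card : ℝ)

/-- (ε,d)-regularity with crossing-aware clique sets. -/
def RegPairC (W : Finset V) (cr : Finset (Finset V)) (j : ℕ) (ε d : ℝ)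
    (A B : Finset (Finset V)) : Prop :=
  ∀ Q ⊆ B, ε * ((KsetC W cr j (j+1) B).card : ℝ) ≤ ((KsetC W cr j (j+1) Q).card : ℝ) →
    |((A ∩ KsetC W cr j (j+1) Q).card : ℝ) - d * ((KsetC W cr j (j+1) Q).card : ℝ)|
      ≤ ε * ((KsetC W cr j (j+1) Q).card : ℝ)

/-- Relative density `d(A | B)` of the (j+1)-graph `A` w.r.t. the j-graph `B`. -/
def dens (W : Finset V) (cr : Finset (Finset V)) (j : ℕ) (A B : Finset (Finset V)) : ℝ :=
  if (KsetC W cr j (j+1) B).card = 0 then 0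
  else ((A ∩ KsetC W cr j (j+1) B).card : ℝ) / ((KsetC W cr j (j+1) B).card : ℝ)

/-- `H` is a k-graph on the vertex set `W`. -/
def IsKGraph (W : Finset V) (k : ℕ) (H : Finset (Finset V)) : Prop :=
  ∀ e ∈ H, e ⊆ W ∧ e.card = k

/-- symmetric difference of two hypergraphs -/
def sd (A B : Finset (Finset V)) : Finset (Finset V) := (A \ B) ∪ (B \ A)

/-- A (candidate) family of partitions: the ground set, the class of each vertex and,
for each level `j ≥ 2`, the class of each crossing j-set. -/
structure PartFam (V : Type*) [DecidableEq V] where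
  gnd : Finset V
  vClass : V → Finset V
  cls : ℕ → Finset V → Finset (Finset V)

namespace PartFam

variable (F : PartFam V)

/-- crossing i-sets -/
def cross (i : ℕ) : Finset (Finset V) :=
  (F.gnd.powersetCard i).filter fun S =>
    ∀ u ∈ S, ∀ v ∈ S, u ≠ v → F.vClass u ≠ F.vClass v

/-- the level-j polyad of a vertex set `J` -/
def polyad (j : ℕ) (J : Finset V) : Finset (Finset V) :=
  if j = 1 then sing (J.sup F.vClass) else (J.powersetCard j).sup (F.cls j)

/-- the clique set `K_j(P̂^{(j-1)}(J))` of the (j−1)-polyad of a crossing j-set `J` -/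
def polyCliques (j : ℕ) (J : Finset V) : Finset (Finset V) :=
  KsetC F.gnd (F.cross j) (j-1) j (F.polyad (j-1) J)

/-- `F` is a family of partitions `P(k−1, a)`. -/
def IsFamily (k : ℕ) (a : ℕ → ℕ) : Prop :=
  (∀ v ∈ F.gnd, v ∈ F.vClass v) ∧
  (∀ v ∈ F.gnd, F.vClass v ⊆ F.gnd) ∧
  (∀ u ∈ F.gnd, ∀ v ∈ F.gnd, u ∈ F.vClass v → F.vClass u = F.vClass v) ∧
  (F.gnd.image F.vClass).card = a 1 ∧ k ≤ a 1 ∧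
  ∀ j, 2 ≤ j → j ≤ k - 1 →
    (∀ J ∈ F.cross j, J ∈ F.cls j J) ∧
    (∀ J ∈ F.cross j, ∀ I ∈ F.cls j J, F.cls j I = F.cls j J) ∧
    (∀ J ∈ F.cross j, F.cls j J ⊆ F.polyCliques j J) ∧
    (∀ J ∈ F.cross j, F.polyCliques j J ⊆ F.cross j) ∧
    (∀ J ∈ F.cross j, ((F.polyCliques j J).image (F.cls j)).card = a j)

/-- the regularity condition in the definition of an equitable family of partitions:
all polyad complexes of crossing k-sets are (ε, (1/a_2, …, 1/a_{k−1}))-regular. -/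
def PolyadReg (k : ℕ) (a : ℕ → ℕ) (ε : ℝ) : Prop :=
  ∀ K ∈ F.cross k, ∀ j, 2 ≤ j → j ≤ k - 1 → ∀ J ∈ K.powersetCard j,
    RegPairC F.gnd (F.cross j) (j-1) ε (1 / (a j : ℝ)) (F.polyad j K) (F.polyad (j-1) J)

/-- `(η, ε, a, λ)`-equitable family of partitions -/
def IsEquitable (k : ℕ) (a : ℕ → ℕ) (η ε lam : ℝ) : Prop :=
  1 ≤ η * (a 1 : ℝ) ∧
  (∀ v ∈ F.gnd, |((F.vClass v).card : ℝ) - (F.gnd.card : ℝ) / (a 1 : ℝ)|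
      ≤ lam * (F.gnd.card : ℝ) / (a 1 : ℝ)) ∧
  F.PolyadReg k a ε

/-- `(η, ε, a)`-equitable family of partitions (classes of size ⌊n/a₁⌋ or ⌊n/a₁⌋+1) -/
def IsEquitableE (k : ℕ) (a : ℕ → ℕ) (η ε : ℝ) : Prop :=
  1 ≤ η * (a 1 : ℝ) ∧
  (∀ v ∈ F.gnd, (F.vClass v).card = F.gnd.card / a 1 ∨
      (F.vClass v).card = F.gnd.card / a 1 + 1) ∧
  F.PolyadReg k a ε

/-- `G` is perfectly ε-regular with respect to `F`. -/
def PerfectlyRegular (k : ℕ) (ε : ℝ) (G : Finset (Finset V)) : Prop :=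
  ∀ K ∈ F.cross k, ∃ d : ℝ, 0 ≤ d ∧
    RegPairC F.gnd (F.cross k) (k-1) ε d G (F.polyad (k-1) K)

end PartFam

/-- `a` is a T-bounded vector of length k−1. -/
def BoundedVec (k T : ℕ) (a : ℕ → ℕ) : Prop := ∀ j, 1 ≤ j → j ≤ k - 1 → a j ≤ T

/-- level-j refinement `F^{(j)} ≺ P^{(j)}` between two families of partitions -/
def RefinesAt (F P : PartFam V) (j : ℕ) : Prop :=
  if j = 1 then ∀ v ∈ F.gnd, F.vClass v ⊆ P.vClass v
  else ∀ I ∈ F.cross j,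
    (∃ J ∈ P.cross j, F.cls j I ⊆ P.cls j J) ∨ ∀ S ∈ F.cls j I, S ∉ P.cross j

/-- level-j approximate refinement `F^{(j)} ≺_ν P^{(j)}` -/
def RefinesApproxAt (F P : PartFam V) (j : ℕ) (ν : ℝ) : Prop :=
  if j = 1 then
    ∃ f : Finset V → Finset V,
      (∀ v ∈ F.gnd, f (F.vClass v) ∈ F.gnd.image P.vClass) ∧
      ∑ C ∈ F.gnd.image F.vClass, ((C \ f C).card : ℝ) ≤ ν * (F.gnd.card : ℝ)
  else
    ∃ f : Finset (Finset V) → Finset (Finset V),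
      (∀ I ∈ F.cross j,
        f (F.cls j I) ∈ ((P.cross j).image (P.cls j)) ∪ {F.cross j \ P.cross j}) ∧
      ∑ C ∈ (F.cross j).image (F.cls j), ((C \ f C).card : ℝ) ≤ ν * ((F.cross j).card : ℝ)

/-- The address space: a base set (of class indices) together with a labelling of its subsets. -/
abbrev Addr := Finset ℕ × (Finset ℕ → ℕ)

/-- `x` is an element of the address space `Â(l, j, a)`. -/
def IsAddress (l j : ℕ) (a : ℕ → ℕ) (x : Addr) : Prop :=
  x.1.card = l ∧ (∀ i ∈ x.1, 1 ≤ i ∧ i ≤ a 1) ∧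
  (∀ L : Finset ℕ, L ⊆ x.1 → 2 ≤ L.card → L.card ≤ j → 1 ≤ x.2 L ∧ x.2 L ≤ a L.card) ∧
  (∀ L : Finset ℕ, ¬(L ⊆ x.1 ∧ 2 ≤ L.card ∧ L.card ≤ j) → x.2 L = 0)

/-- restriction `ŷ ≤ x̂` of an address to the base `B`, keeping levels up to `j`. -/
def restrictA (x : Addr) (j : ℕ) (B : Finset ℕ) : Addr :=
  (B, fun L => if L ⊆ B ∧ 2 ≤ L.card ∧ L.card ≤ j then x.2 L else 0)

/-- `d` is a density function of `Â(k, k−1, a)`. -/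
def DensityFun (k : ℕ) (a : ℕ → ℕ) (d : Addr → ℝ) : Prop :=
  ∀ x : Addr, IsAddress k (k-1) a x → 0 ≤ d x ∧ d x ≤ 1

/-- A family of partitions together with an `a`-labelling. -/
structure LabFam (V : Type*) [DecidableEq V] extends PartFam V where
  vIdx : V → ℕ
  lbl : ℕ → Finset V → ℕ

namespace LabFam

variable (F : LabFam V)

/-- `F` is a family of partitions with a legitimate `a`-labelling. -/
def IsLabeled (k : ℕ) (a : ℕ → ℕ) : Prop :=
  F.toPartFam.IsFamily k a ∧
  (∀ v ∈ F.gnd, 1 ≤ F.vIdx v ∧ F.vIdx v ≤ a 1) ∧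
  (∀ u ∈ F.gnd, ∀ v ∈ F.gnd, (F.vIdx u = F.vIdx v ↔ F.vClass u = F.vClass v)) ∧
  ∀ j, 2 ≤ j → j ≤ k - 1 →
    (∀ I ∈ F.toPartFam.cross j, 1 ≤ F.lbl j I ∧ F.lbl j I ≤ a j) ∧
    (∀ I ∈ F.toPartFam.cross j, ∀ I' ∈ F.cls j I, F.lbl j I' = F.lbl j I) ∧
    (∀ I ∈ F.toPartFam.cross j, ∀ I' ∈ F.toPartFam.cross j,
      F.toPartFam.polyad (j-1) I = F.toPartFam.polyad (j-1) I' →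
      F.lbl j I = F.lbl j I' → F.cls j I = F.cls j I')

/-- the address `x̂(L)` (up to level j) of a crossing set `L` -/
def addrOf (j : ℕ) (L : Finset V) : Addr :=
  (L.image F.vIdx,
   fun M => if M ⊆ L.image F.vIdx ∧ 2 ≤ M.card ∧ M.card ≤ j
     then F.lbl M.card (L.filter fun v => F.vIdx v ∈ M) else 0)

/-- the part `P^{(j)}(x̂, b)` -/
def partAt (j : ℕ) (x : Addr) (b : ℕ) : Finset (Finset V) :=
  if j ≤ 1 then (if x.1 = {b} then sing (F.gnd.filter fun v => F.vIdx v = b) else ∅)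
  else (F.toPartFam.cross j).filter fun I => F.addrOf (j-1) I = x ∧ F.lbl j I = b

/-- the polyad `P̂^{(j)}(x̂)` -/
def polyAt (j : ℕ) (x : Addr) : Finset (Finset V) :=
  if j = 1 then sing (F.gnd.filter fun v => F.vIdx v ∈ x.1)
  else (x.1.powersetCard j).sup fun B => F.partAt j (restrictA x (j-1) B) (x.2 B)

/-- `F` is an `(ε, d)`-partition of `H`. -/
def IsDensPartition (k : ℕ) (a : ℕ → ℕ) (ε : ℝ) (d : Addr → ℝ)
    (H : Finset (Finset V)) : Prop :=
  ∀ x : Addr, IsAddress k (k-1) a x →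
    RegPairC F.gnd (F.toPartFam.cross k) (k-1) ε (d x) H (F.polyAt (k-1) x)

/-- `F` is an `(ε, a, d)`-equitable partition of `H`. -/
def IsEquitPartition (k : ℕ) (a : ℕ → ℕ) (ε : ℝ) (d : Addr → ℝ)
    (H : Finset (Finset V)) : Prop :=
  F.IsLabeled k a ∧ F.toPartFam.IsEquitableE k a (1 / (a 1 : ℝ)) ε ∧
  F.IsDensPartition k a ε d H

end LabFam

/-- An ℓ-partite complex: vertex classes and, for each level, a partite graph. -/
structure Cx (V : Type*) [DecidableEq V] (l : ℕ) where
  C : Fin l → Finset V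
  G : ℕ → Finset (Finset V)

namespace Cx

variable {l : ℕ} (X : Cx V l)

def gnd : Finset V := Finset.univ.sup X.C

/-- crossing i-sets with respect to the classes of `X` -/
def cross (i : ℕ) : Finset (Finset V) :=
  (X.gnd.powersetCard i).filter fun S => ∀ t : Fin l, (S ∩ X.C t).card ≤ 1

/-- restriction of the level-j graph to the classes indexed by `L` -/
def restr (j : ℕ) (L : Finset (Fin l)) : Finset (Finset V) :=
  if j = 1 then sing (L.sup X.C) else (X.G j).filter fun e => e ⊆ L.sup X.C

/-- `X` is a complex with levels up to `k`. -/
def IsComplex (k : ℕ) : Prop :=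
  (∀ s t : Fin l, s ≠ t → Disjoint (X.C s) (X.C t)) ∧
  (∀ j, 2 ≤ j → j ≤ k → X.G j ⊆ X.cross j) ∧
  (∀ j, 3 ≤ j → j ≤ k → X.G j ⊆ Kset X.gnd (j-1) j (X.G (j-1)))

/-- `X` is an (ε, (d_2, …, d_k))-regular complex. -/
def IsRegular (k : ℕ) (ε : ℝ) (d : ℕ → ℝ) : Prop :=
  ∀ j, 2 ≤ j → j ≤ k → ∀ L ∈ (Finset.univ : Finset (Fin l)).powersetCard j,
    RegPairC X.gnd (X.cross j) (j-1) ε (d j) (X.G j) (X.restr (j-1) L)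

/-- The restricted complex `X[L]` is (ε, (d_2, …, d_{k−1}, p))-regular. -/
def RestrRegular (k : ℕ) (ε : ℝ) (d : ℕ → ℝ) (L : Finset (Fin l)) (p : ℝ) : Prop :=
  ∀ j, 2 ≤ j → j ≤ k → ∀ L' ∈ L.powersetCard j,
    RegPairC X.gnd (X.cross j) (j-1) ε (if j = k then p else d j)
      (X.restr j L) (X.restr (j-1) L')

/-- clique set `K_i` of the level-j graph of the complex (level 1: crossing sets). -/
def KsetLvl (j i : ℕ) : Finset (Finset V) :=
  if j ≤ 1 then X.cross i else Kset X.gnd j i (X.G j)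

end Cx

/-- `eCL`, `mCL` satisfy the counting lemma of Kohayakawa–Rödl–Skokan. -/
def CountingProp (eCL : ℝ → ℝ → ℕ → ℕ → ℝ) (mCL : ℝ → ℝ → ℕ → ℕ → ℕ) : Prop :=
  ∀ γ d₀ : ℝ, 0 < γ → 0 < d₀ → ∀ k l : ℕ, 2 ≤ k → k ≤ l →
    (0 < eCL γ d₀ k l ∧ eCL γ d₀ k l ≤ 1) ∧
    ∀ (V₀ : Type) [DecidableEq V₀], ∀ (X : Cx V₀ l) (m : ℕ) (lam ε : ℝ) (d : ℕ → ℝ),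
      0 ≤ lam → lam < 1/4 → 0 < ε → ε ≤ eCL γ d₀ k l → mCL γ d₀ k l ≤ m →
      (∀ j, 2 ≤ j → j ≤ k → d₀ ≤ d j) →
      X.IsComplex k →
      (∀ i, |((X.C i).card : ℝ) - (m : ℝ)| ≤ lam * m) →
      X.IsRegular k ε d →
      |((Kset X.gnd k l (X.G k)).card : ℝ) -
        (∏ j ∈ Finset.Icc 2 k, d j ^ (l.choose j)) * ∏ i, ((X.C i).card : ℝ)|
        ≤ γ * ((∏ j ∈ Finset.Icc 2 k, d j ^ (l.choose j)) * ∏ i, ((X.C i).card : ℝ))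

/-- `eRI` is a legitimate function for defining regularity instances. -/
def GoodERI (eRI : ℕ → ℕ → ℝ) : Prop :=
  (∀ t k : ℕ, 1 ≤ t → 2 ≤ k → 0 < eRI t k ∧ eRI t k ≤ 1) ∧
  (∀ k t t' : ℕ, 1 ≤ t → t ≤ t' → eRI t' k ≤ eRI t k) ∧
  (∀ t k k' : ℕ, 2 ≤ k → k ≤ k' → eRI t k' ≤ eRI t k) ∧
  (∀ k : ℕ, Filter.Tendsto (fun t => eRI t k) Filter.atTop (nhds 0)) ∧
  ∃ (eCL : ℝ → ℝ → ℕ → ℕ → ℝ) (mCL : ℝ → ℝ → ℕ → ℕ → ℕ),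
    CountingProp eCL mCL ∧
    ∀ t k : ℕ, 1 ≤ t → 2 ≤ k →
      eRI t k < eCL (1/(t:ℝ)) (1/(t:ℝ)) (k-1) k / (4 * (t:ℝ) ^ (4^k))

/-- `max_i a_i` over `i ∈ [k−1]` -/
def maxA (k : ℕ) (a : ℕ → ℕ) : ℕ := (Finset.Icc 1 (k-1)).sup a

/-- `(ε, a, d)` is a regularity instance. -/
def RegInstance (eRI : ℕ → ℕ → ℝ) (k : ℕ) (ε : ℝ) (a : ℕ → ℕ) (d : Addr → ℝ) : Prop :=
  2 ≤ k ∧ (∀ j, 1 ≤ j → j ≤ k - 1 → 1 ≤ a j) ∧ 0 < ε ∧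
  ε ≤ eRI (maxA k a) k ∧ DensityFun k a d

section Counting

variable {W : Type} [Fintype W] [DecidableEq W]

/-- `S` spans an induced copy of `Fg` in `H` (both k-graphs). -/
def InducedCopy (Fg : Finset (Finset W)) (H : Finset (Finset V)) (k : ℕ) (S : Finset V) :
    Prop :=
  ∃ e : W → V, Function.Injective e ∧ Finset.univ.image e = S ∧
    ∀ A : Finset W, A.card = k → (A.image e ∈ H ↔ A ∈ Fg)

/-- the size of the automorphism group of `Fg` -/
def AutCount (Fg : Finset (Finset W)) : ℕ :=
  Nat.card {π : W ≃ W // ∀ A : Finset W, A.image π ∈ Fg ↔ A ∈ Fg}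

/-- the number `IC_σ(F, H)` of σ-induced copies of `Fg` in the complex `X` -/
def ICosig {l : ℕ} (X : Cx V l) (k : ℕ) (Fg : Finset (Finset W)) (σ : W ≃ Fin l) : ℕ :=
  Set.ncard {e : W → V |
    (∀ v, e v ∈ X.C (σ v)) ∧
    Finset.univ.image e ∈ X.KsetLvl (k-1) l ∧
    ∀ A : Finset W, A.card = k → (A.image e ∈ X.G k ↔ A ∈ Fg)}

/-- `IC(F, d, x̂, σ)` -/
def ICs (Fg : Finset (Finset W)) (k l : ℕ) (a : ℕ → ℕ) (d : Addr → ℝ)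
    (x : Addr) (σ : W → ℕ) : ℝ :=
  (∏ B ∈ x.1.powersetCard k,
    if ∃ A ∈ Fg, A.image σ = B then d (restrictA x (k-1) B)
    else 1 - d (restrictA x (k-1) B)) *
  ∏ j ∈ Finset.Icc 2 (k-1), ((a j : ℝ) ^ (l.choose j))⁻¹

/-- `IC(F, d, x̂)` -/
def ICa (Fg : Finset (Finset W)) (k l : ℕ) (a : ℕ → ℕ) (d : Addr → ℝ) (x : Addr) : ℝ :=
  (AutCount Fg : ℝ)⁻¹ *
    ∑ᶠ σ ∈ {σ : W → ℕ | Set.BijOn σ Set.univ ↑x.1}, ICs Fg k l a d x σ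

/-- `IC(F, d)` -/
def IC (Fg : Finset (Finset W)) (k l : ℕ) (a : ℕ → ℕ) (d : Addr → ℝ) : ℝ :=
  (((a 1).choose l : ℝ))⁻¹ * ∑ᶠ x ∈ {x : Addr | IsAddress l (k-1) a x}, ICa Fg k l a d x

end Counting

end

end HypReg
namespace HypReg

open Finset

/-- A function with mean zero over the colours and small values has small exponential moment. -/
theorem sum_exp_le_of_sum_eq_zero {m : ℕ} {l : ℝ} (hl : l ≤ 1) (w : ℕ → ℝ)
    (h0 : ∑ r ∈ range m, w r = 0) (hw : ∀ r ∈ range m, |w r| ≤ l) :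
    ∑ r ∈ range m, Real.exp (w r) ≤ m * Real.exp (l ^ 2) := by
  have h1 : ∀ r ∈ range m, Real.exp (w r) ≤ (1 + l ^ 2) + w r := by
    intro r hr
    have h2 := (abs_le.1 (Real.abs_exp_sub_one_sub_id_le ((hw r hr).trans hl))).2
    have h3 : w r ^ 2 ≤ l ^ 2 := sq_le_sq.2 ((hw r hr).trans (le_abs_self l))
    linarith
  calc ∑ r ∈ range m, Real.exp (w r) ≤ ∑ r ∈ range m, ((1 + l ^ 2) + w r) := sum_le_sum h1
    _ = m * (1 + l ^ 2) := by rw [sum_add_distrib, h0]; simp [mul_add]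
    _ ≤ m * Real.exp (l ^ 2) := by
        gcongr
        linarith [Real.add_one_le_exp (l ^ 2)]

/-- Colouring by conditional expectations: the total exponential weight of a family of tests
stays bounded. -/
theorem exists_coloring_sum_exp_le {α ι : Type*} [DecidableEq α] {m : ℕ} (hm : 0 < m) {l : ℝ}
    (hl : l ≤ 1) (I : Finset ι) (w : ι → α → ℕ → ℝ)
    (h0 : ∀ i ∈ I, ∀ x, ∑ r ∈ range m, w i x r = 0)
    (hw : ∀ i ∈ I, ∀ x, ∀ r ∈ range m, |w i x r| ≤ l) (H : Finset α) :
    ∃ χ : α → ℕ, (∀ x, χ x < m) ∧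
      ∑ i ∈ I, Real.exp (∑ x ∈ H, w i x (χ x)) ≤ #I * Real.exp (l ^ 2 * #H) := by
  induction H using Finset.induction_on with
  | empty => exact ⟨fun _ => 0, fun _ => hm, by simp⟩
  | insert x H hx ih =>
    obtain ⟨χ, hχ, hs⟩ := ih
    have key : ∑ r ∈ range m, ∑ i ∈ I, Real.exp (w i x r + ∑ y ∈ H, w i y (χ y)) ≤
        ∑ r ∈ range m, #I * Real.exp (l ^ 2 * #(insert x H)) := by
      rw [sum_comm, sum_const, card_range, nsmul_eq_mul]
      calc ∑ i ∈ I, ∑ r ∈ range m, Real.exp (w i x r + ∑ y ∈ H, w i y (χ y))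
          = ∑ i ∈ I, (∑ r ∈ range m, Real.exp (w i x r)) *
              Real.exp (∑ y ∈ H, w i y (χ y)) := by
            simp_rw [Real.exp_add, sum_mul]
        _ ≤ ∑ i ∈ I, (m * Real.exp (l ^ 2)) * Real.exp (∑ y ∈ H, w i y (χ y)) := by
            refine sum_le_sum fun i hi => ?_
            gcongr
            exact sum_exp_le_of_sum_eq_zero hl _ (h0 i hi x) (hw i hi x)
        _ = (m * Real.exp (l ^ 2)) * ∑ i ∈ I, Real.exp (∑ y ∈ H, w i y (χ y)) := by
            rw [mul_sum]
        _ ≤ (m * Real.exp (l ^ 2)) * (#I * Real.exp (l ^ 2 * #H)) := by gcongr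
        _ = m * (#I * Real.exp (l ^ 2 * #(insert x H))) := by
            rw [card_insert_of_notMem hx]
            push_cast
            rw [mul_add, Real.exp_add, mul_one]
            ring
    obtain ⟨r, hr, hle⟩ := exists_le_of_sum_le (nonempty_range_iff.2 hm.ne') key
    refine ⟨Function.update χ x r, fun y => ?_, ?_⟩
    · by_cases hy : y = x
      · subst hy; simpa using hr
      · simpa [hy] using hχ y
    · refine le_trans (le_of_eq ?_) hle
      refine sum_congr rfl fun i _ => ?_
      rw [sum_insert hx, Function.update_self]
      congr 2
      refine sum_congr rfl fun y hy => ?_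
      rw [Function.update_of_ne (ne_of_mem_of_not_mem hy hx)]

/-- A finite set has an `m`-colouring splitting every member of a family of sets almost evenly. -/
theorem exists_balanced_coloring {α : Type*} [DecidableEq α] {m : ℕ} (hm : 0 < m) {l : ℝ}
    (hl0 : 0 < l) (hl : l ≤ 1) (H : Finset α) (𝓔 : Finset (Finset α)) :
    ∃ χ : α → ℕ, (∀ x, χ x < m) ∧ ∀ E ∈ 𝓔, ∀ c < m,
      |(#{x ∈ H ∩ E | χ x = c} : ℝ) - #(H ∩ E) / m| ≤
        Real.log (2 * m * #𝓔) / l + l * #H := by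
  have hm' : (0 : ℝ) < m := by exact_mod_cast hm
  have hm1 : (1 : ℝ) ≤ m := by exact_mod_cast hm
  let I : Finset ((Finset α × ℕ) × ℝ) := (𝓔 ×ˢ range m) ×ˢ {l, -l}
  let w : ((Finset α × ℕ) × ℝ) → α → ℕ → ℝ := fun i x r =>
    if x ∈ i.1.1 then i.2 * ((if r = i.1.2 then 1 else 0) - 1 / m) else 0
  have hw0 : ∀ i ∈ I, ∀ x, ∑ r ∈ range m, w i x r = 0 := by
    rintro ⟨⟨E, c⟩, s⟩ hi x
    simp only [I, mem_product, mem_range] at hi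
    by_cases hx : x ∈ E
    · simp only [w, hx, if_true]
      rw [← mul_sum, sum_sub_distrib, sum_ite_eq' ]
      simp [hi.1.2, hm'.ne']
    · simp [w, hx]
  have hwl : ∀ i ∈ I, ∀ x, ∀ r ∈ range m, |w i x r| ≤ l := by
    rintro ⟨⟨E, c⟩, s⟩ hi x r hr
    simp only [I, mem_product, mem_range, mem_insert, mem_singleton] at hi
    have hs : |s| = l := by
      rcases hi.2 with rfl | rfl <;> simp [abs_of_pos hl0]
    have hinv : (1 : ℝ) / m ≤ 1 := by rw [div_le_one hm']; exact hm1
    have hinv0 : 0 < (1 : ℝ) / m := by positivity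
    by_cases hx : x ∈ E
    · simp only [w, hx, if_true]
      rw [abs_mul, hs]
      refine mul_le_of_le_one_right hl0.le ?_
      split_ifs <;> rw [abs_le] <;> constructor <;> linarith
    · simp [w, hx, hl0.le]
  obtain ⟨χ, hχ, hs⟩ := exists_coloring_sum_exp_le hm hl I w hw0 hwl H
  refine ⟨χ, hχ, fun E hE c hc => ?_⟩
  have hI : (#I : ℝ) = 2 * m * #𝓔 := by
    have : l ≠ -l := by intro h; linarith
    simp only [I, card_product, card_range, card_pair this]
    push_cast; ring
  have hpos : (0 : ℝ) < 2 * m * #𝓔 := by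
    have : (0 : ℝ) < #𝓔 := by exact_mod_cast card_pos.2 ⟨E, hE⟩
    positivity
  have hsum : ∀ s : ℝ, ∑ x ∈ H, w ((E, c), s) x (χ x) =
      s * ((#{x ∈ H ∩ E | χ x = c} : ℝ) - #(H ∩ E) / m) := by
    intro s
    simp only [w]
    rw [← sum_filter, filter_mem_eq_inter, ← mul_sum, sum_sub_distrib]
    simp [div_eq_mul_inv]
  have hb : ∀ s ∈ ({l, -l} : Finset ℝ),
      s * ((#{x ∈ H ∩ E | χ x = c} : ℝ) - #(H ∩ E) / m) ≤
        Real.log (2 * m * #𝓔) + l ^ 2 * #H := by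
    intro s hsm
    rw [← hsum, ← Real.exp_le_exp, Real.exp_add, Real.exp_log hpos, ← hI]
    refine le_trans ?_ hs
    refine single_le_sum (f := fun i => Real.exp (∑ x ∈ H, w i x (χ x)))
      (fun i _ => (Real.exp_pos _).le) ?_
    simp only [I, mem_product, mem_range]
    exact ⟨⟨hE, hc⟩, hsm⟩
  have e : Real.log (2 * m * #𝓔) / l + l * #H =
      (Real.log (2 * m * #𝓔) + l ^ 2 * #H) / l := by field_simp
  rw [e, le_div_iff₀ hl0]
  have h1 := hb l (by simp)
  have h2 := hb (-l) (by simp)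
  rw [← le_div_iff₀ hl0, abs_le, le_div_iff₀ hl0, ← neg_div, div_le_iff₀ hl0]
  constructor <;> linarith

theorem exists_bijOn_range {β : Type*} (s : Finset β) :
    ∃ e : β → ℕ, Set.BijOn e s (range #s) := by
  classical
  refine ⟨fun y => if h : y ∈ s then s.equivFin ⟨y, h⟩ else 0, ?_, ?_, ?_⟩
  · intro y hy
    have hy' : y ∈ s := hy
    simp [hy']
  · intro y hy z hz h
    have hy' : y ∈ s := hy
    have hz' : z ∈ s := hz
    simp only [hy', hz', dif_pos] at h
    simpa using s.equivFin.injective (Fin.ext h)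
  · intro i hi
    have hi' : i < #s := by simpa using hi
    refine ⟨s.equivFin.symm ⟨i, hi'⟩, (s.equivFin.symm ⟨i, hi'⟩).2, ?_⟩
    simp

/-- A finite set can be split by `c` colours into parts of nearly equal size. -/
theorem exists_coloring_card_filter {β : Type*} (s : Finset β) {c : ℕ} (hc : 0 < c) :
    ∃ f : β → ℕ, (∀ x, f x < c) ∧
      ∀ r < c, #{x ∈ s | f x = r} = #s / c + if r < #s % c then 1 else 0 := by
  obtain ⟨e, he⟩ := exists_bijOn_range s
  refine ⟨fun x => e x % c, fun x => Nat.mod_lt _ hc, fun r hr => ?_⟩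
  have h1 := Nat.count_modEq_card (#s) hc r
  rw [Nat.mod_eq_of_lt hr] at h1
  rw [← h1, Nat.count_eq_card_filter_range]
  refine card_bij (fun x _ => e x) ?_ ?_ ?_
  · intro x hx
    rw [mem_filter] at hx ⊢
    refine ⟨by simpa using he.mapsTo hx.1, ?_⟩
    rw [Nat.ModEq, Nat.mod_eq_of_lt hr]
    exact hx.2
  · intro x hx y hy h
    exact he.injOn (mem_filter.1 hx).1 (mem_filter.1 hy).1 h
  · intro i hi
    rw [mem_filter] at hi
    obtain ⟨x, hx, rfl⟩ := he.surjOn hi.1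
    refine ⟨x, mem_filter.2 ⟨hx, ?_⟩, rfl⟩
    have := hi.2
    rwa [Nat.ModEq, Nat.mod_eq_of_lt hr] at this

/-- An equipartition into `a` classes refines to an equipartition into `b` classes if `a ∣ b`. -/
theorem exists_equitable_refinement {α β : Type*} [DecidableEq β] (W : Finset α) (f : α → β)
    {a b : ℕ} (hab : a ∣ b) (hb : 0 < b) (hf : #(W.image f) = a)
    (hsz : ∀ y ∈ W.image f, #{u ∈ W | f u = y} = #W / a ∨ #{u ∈ W | f u = y} = #W / a + 1) :
    ∃ g : α → ℕ, (∀ v, v ∈ W → g v < b) ∧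
      (∀ u ∈ W, ∀ v ∈ W, g u = g v → f u = f v) ∧
      ∀ c < b, #{u ∈ W | g u = c} = #W / b ∨ #{u ∈ W | g u = c} = #W / b + 1 := by
  obtain ⟨m, rfl⟩ := hab
  have hm : 0 < m := Nat.pos_of_mul_pos_left hb
  obtain ⟨e, he⟩ := exists_bijOn_range (W.image f)
  rw [hf] at he
  have hs : ∀ y : β, ∃ h : α → ℕ, (∀ x, h x < m) ∧ ∀ r < m, #{x ∈ {u ∈ W | f u = y} | h x = r} =
      #{u ∈ W | f u = y} / m + if r < #{u ∈ W | f u = y} % m then 1 else 0 :=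
    fun y => exists_coloring_card_filter _ hm
  choose h hh1 hh2 using hs
  have hea : ∀ v ∈ W, e (f v) < a := fun v hv => by
    simpa using he.mapsTo (mem_image_of_mem f hv)
  have hdiv : ∀ p r, r < m → (m * p + r) / m = p := fun p r hr => by
    rw [Nat.mul_add_div hm, Nat.div_eq_of_lt hr, add_zero]
  have hmod : ∀ p r, r < m → (m * p + r) % m = r := fun p r hr => by
    rw [Nat.mul_add_mod, Nat.mod_eq_of_lt hr]
  refine ⟨fun v => m * e (f v) + h (f v) v, ?_, ?_, ?_⟩
  · intro v hv
    calc m * e (f v) + h (f v) v < m * e (f v) + m := by gcongr; exact hh1 _ _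
      _ = (e (f v) + 1) * m := by ring
      _ ≤ a * m := by gcongr; exact hea v hv
  · intro u hu v hv huv
    refine he.injOn (mem_image_of_mem f hu) (mem_image_of_mem f hv) ?_
    have := congrArg (· / m) huv
    simpa only [hdiv _ _ (hh1 _ _)] using this
  · intro c hc
    have hca : c / m < a := by rw [Nat.div_lt_iff_lt_mul hm]; exact hc
    obtain ⟨y, hy, hyc⟩ := he.surjOn (show c / m ∈ (range a : Set ℕ) by simpa using hca)
    have heq : {u ∈ W | m * e (f u) + h (f u) u = c} =
        {x ∈ {u ∈ W | f u = y} | h y x = c % m} := by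
      ext u
      simp only [mem_filter, and_assoc]
      refine and_congr_right fun hu => ?_
      constructor
      · intro hq
        have h1 : e (f u) = c / m := by rw [← hq, hdiv _ _ (hh1 _ _)]
        have h2 : f u = y := he.injOn (mem_image_of_mem f hu) hy (h1.trans hyc.symm)
        refine ⟨h2, ?_⟩
        rw [← h2, ← hq, hmod _ _ (hh1 _ _)]
      · rintro ⟨h1, h2⟩
        rw [h1, hyc, h2, Nat.div_add_mod]
    rw [heq, hh2 y _ (Nat.mod_lt _ hm), ← Nat.div_div_eq_div_mul]
    have hN := hsz y hy
    generalize #{u ∈ W | f u = y} = N at hN ⊢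
    generalize #W / a = q at hN ⊢
    obtain rfl | rfl := hN
    · split_ifs <;> simp
    · rw [Nat.succ_div]
      by_cases hd : m ∣ q + 1
      · simp [hd, Nat.mod_eq_zero_of_dvd hd]
      · split_ifs <;> simp

variable {V : Type*} [DecidableEq V]

/-- The members of `𝓢` all of whose `i`-subsets belong to `R`. -/
def cliqueSets (𝓢 : Finset (Finset V)) (i : ℕ) (R : Finset (Finset V)) : Finset (Finset V) :=
  {S ∈ 𝓢 | ∀ T ∈ S.powersetCard i, T ∈ R}

theorem mem_cliqueSets {𝓢 : Finset (Finset V)} {i : ℕ} {R : Finset (Finset V)} {S : Finset V} :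
    S ∈ cliqueSets 𝓢 i R ↔ S ∈ 𝓢 ∧ ∀ T ∈ S.powersetCard i, T ∈ R := mem_filter

/-- Colourings that split all clique sets inside any large family of `j`-sets evenly. -/
theorem exists_coloring_cliqueSets {δ : ℝ} (hδ : 0 < δ) (hδ1 : δ ≤ 1) (t : ℕ) :
    ∃ n₀ : ℕ, ∀ (V : Type) [DecidableEq V] (W : Finset V), n₀ ≤ #W →
      ∀ j m : ℕ, 2 ≤ j → 0 < m → m ≤ t → ∀ H ⊆ W.powersetCard j,
        ∃ χ : Finset V → ℕ, (∀ S, χ S < m) ∧ ∀ R : Finset (Finset V), ∀ c < m,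
          |(#{S ∈ cliqueSets H (j - 1) R | χ S = c} : ℝ) - #(cliqueSets H (j - 1) R) / m| ≤
            δ * (#W : ℝ) ^ j := by
  refine ⟨⌈(2 * t + 1) * 4 / δ ^ 2⌉₊ + 1, fun V _ W hW j m hj hm hmt H hH => ?_⟩
  let X := W.powersetCard (j - 1)
  obtain ⟨χ, hχ, h⟩ := exists_balanced_coloring hm (half_pos hδ) (by linarith) H
    (X.powerset.image (cliqueSets H (j - 1)))
  refine ⟨χ, hχ, fun R c hc => ?_⟩
  have hR : H ∩ cliqueSets H (j - 1) (R ∩ X) = cliqueSets H (j - 1) R := by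
    ext S
    simp only [mem_inter, mem_cliqueSets]
    constructor
    · rintro ⟨h1, -, h2⟩
      exact ⟨h1, fun T hT => (h2 T hT).1⟩
    · rintro ⟨h1, h2⟩
      refine ⟨h1, h1, fun T hT => ⟨h2 T hT, ?_⟩⟩
      have h3 := (mem_powersetCard.1 (hH h1)).1
      rw [mem_powersetCard] at hT
      exact mem_powersetCard.2 ⟨hT.1.trans h3, hT.2⟩
  have := h _ (mem_image_of_mem _ (mem_powerset.2 (inter_subset_right (s₁ := R)))) c hc
  rw [hR] at this
  refine this.trans ?_
  set n := #W
  set N := #(X.powerset.image (cliqueSets H (j - 1)))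
  have hn : (2 * t + 1) * 4 / δ ^ 2 ≤ (n : ℝ) :=
    (Nat.le_ceil _).trans (by exact_mod_cast (Nat.le_succ _).trans hW)
  have hn1 : (1 : ℝ) ≤ n := by
    have : 1 ≤ n := by omega
    exact_mod_cast this
  have hN0 : 0 < N := card_pos.2 ⟨_, mem_image_of_mem _ (mem_powerset_self X)⟩
  have hN0' : (0 : ℝ) < N := by exact_mod_cast hN0
  have hm0' : (0 : ℝ) < m := by exact_mod_cast hm
  have hN : (N : ℝ) ≤ 2 ^ (n ^ (j - 1)) := by
    have h1 : N ≤ 2 ^ #X := card_image_le.trans (card_powerset X).le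
    have h2 : #X ≤ n ^ (j - 1) := by
      rw [card_powersetCard]; exact Nat.choose_le_pow _ _
    exact_mod_cast h1.trans (Nat.pow_le_pow_right (by norm_num) h2)
  have hlog : Real.log (2 * m * N) ≤ (2 * t + 1) * (n : ℝ) ^ (j - 1) := by
    rw [Real.log_mul (by positivity) (by positivity)]
    have h1 : Real.log (2 * m) ≤ 2 * t := by
      have h2 := Real.log_le_sub_one_of_pos (show (0 : ℝ) < 2 * m by positivity)
      have h3 : (m : ℝ) ≤ t := by exact_mod_cast hmt
      linarith
    have h2 : Real.log N ≤ (n : ℝ) ^ (j - 1) := by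
      have h3 := Real.log_le_log hN0' hN
      rw [Real.log_pow] at h3
      push_cast at h3
      have h4 := Real.log_two_lt_d9
      have h5 : (0 : ℝ) < (n : ℝ) ^ (j - 1) := by positivity
      nlinarith
    have h3 : (1 : ℝ) ≤ (n : ℝ) ^ (j - 1) := one_le_pow₀ hn1
    have h4 : (0 : ℝ) ≤ 2 * t := by positivity
    nlinarith
  have hH' : (#H : ℝ) ≤ (n : ℝ) ^ j := by
    have h1 := card_le_card hH
    rw [card_powersetCard] at h1
    exact_mod_cast h1.trans (Nat.choose_le_pow _ _)
  have hj' : (n : ℝ) ^ j = n * (n : ℝ) ^ (j - 1) := by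
    rw [← pow_succ']; congr 1; omega
  have h1 : Real.log (2 * m * N) / (δ / 2) ≤ δ / 2 * (n : ℝ) ^ j := by
    rw [div_le_iff₀ (half_pos hδ)]
    refine hlog.trans ?_
    rw [hj']
    rw [div_le_iff₀ (by positivity)] at hn
    have h5 : (0 : ℝ) < (n : ℝ) ^ (j - 1) := by positivity
    nlinarith
  have h2 : δ / 2 * #H ≤ δ / 2 * (n : ℝ) ^ j := by gcongr
  linarith

section Families

theorem exists_mem_powersetCard_mem {V : Type*} {S : Finset V} {i : ℕ} {x : V} (hx : x ∈ S)
    (hi : 1 ≤ i) (hS : i ≤ #S) : ∃ T ∈ S.powersetCard i, x ∈ T := by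
  obtain ⟨T, h1, h2, h3⟩ := exists_subsuperset_card_eq (singleton_subset_iff.2 hx)
    (by simpa using hi) hS
  exact ⟨T, mem_powersetCard.2 ⟨h2, h3⟩, singleton_subset_iff.1 h1⟩

theorem image_filter_mem {α β : Type*} [DecidableEq β] (f : α → β) (S : Finset α)
    {C : Finset β} (hC : C ⊆ S.image f) : {v ∈ S | f v ∈ C}.image f = C := by
  ext c
  simp only [mem_image, mem_filter]
  constructor
  · rintro ⟨v, ⟨-, hv⟩, rfl⟩
    exact hv
  · intro hc
    obtain ⟨v, hv, rfl⟩ := mem_image.1 (hC hc)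
    exact ⟨v, ⟨hv, hc⟩, rfl⟩

variable {V : Type*} [DecidableEq V]

theorem mem_sing {U : Finset V} {T : Finset V} : T ∈ sing U ↔ ∃ v ∈ U, {v} = T := by
  simp [sing]

theorem exists_mem_powersetCard_mem_mem {S : Finset V} {i : ℕ} {x y : V} (hx : x ∈ S)
    (hy : y ∈ S) (hi : 2 ≤ i) (hS : i ≤ #S) : ∃ T ∈ S.powersetCard i, x ∈ T ∧ y ∈ T := by
  obtain ⟨T, h1, h2, h3⟩ := exists_subsuperset_card_eq
    (show {x, y} ⊆ S by simp [insert_subset_iff, hx, hy]) (card_le_two.trans hi) hS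
  exact ⟨T, mem_powersetCard.2 ⟨h2, h3⟩, h1 (by simp), h1 (by simp)⟩

namespace PartFam

variable {F : PartFam V} {k j i : ℕ} {a : ℕ → ℕ}

theorem mem_cross {S : Finset V} :
    S ∈ F.cross i ↔ (S ⊆ F.gnd ∧ #S = i) ∧ Set.InjOn F.vClass S := by
  rw [cross, mem_filter, mem_powersetCard]
  refine and_congr_right fun _ => ?_
  constructor
  · intro h u hu v hv huv
    by_contra hne
    exact h u hu v hv hne huv
  · intro h u hu v hv hne huv
    exact hne (h hu hv huv)

theorem mem_cross_of_subset {S T : Finset V} (hS : S ∈ F.cross j) (hT : T ⊆ S) (hi : #T = i) :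
    T ∈ F.cross i := by
  rw [mem_cross] at hS ⊢
  exact ⟨⟨hT.trans hS.1.1, hi⟩, hS.2.mono hT⟩

theorem card_image_of_mem_cross {S : Finset V} (hS : S ∈ F.cross j) : #(S.image F.vClass) = j := by
  rw [mem_cross] at hS
  rw [card_image_of_injOn hS.2, hS.1.2]

theorem KsetC_eq_cliqueSets (hj : 2 ≤ j) {R : Finset (Finset V)} (hR : R ⊆ F.cross (j - 1)) :
    KsetC F.gnd (F.cross j) (j - 1) j R = cliqueSets (F.cross j) (j - 1) R := by
  ext S
  rw [mem_cliqueSets, KsetC]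
  split_ifs with h
  · rw [mem_filter, h]
    refine and_congr_right fun _ => ?_
    simp only [mem_powersetCard]
    constructor
    · rintro h1 T ⟨hT, hT1⟩
      obtain ⟨v, rfl⟩ := card_eq_one.1 hT1
      exact h1 v (singleton_subset_iff.1 hT)
    · intro h1 v hv
      exact h1 _ ⟨singleton_subset_iff.2 hv, card_singleton v⟩
  · rw [Kset, mem_filter]
    refine and_congr_left fun h1 => ?_
    rw [mem_cross, mem_powersetCard]
    refine ⟨fun h2 => ⟨h2, fun u hu v hv huv => ?_⟩, fun h2 => h2.1⟩
    obtain ⟨T, hT, huT, hvT⟩ := exists_mem_powersetCard_mem_mem (i := j - 1)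
      (mem_coe.1 hu) (mem_coe.1 hv) (by omega) (by omega)
    exact (mem_cross.1 (hR (h1 T hT))).2 huT hvT huv

theorem mem_polyad {J T : Finset V} (hi : i ≠ 1) :
    T ∈ F.polyad i J ↔ ∃ T' ∈ J.powersetCard i, T ∈ F.cls i T' := by
  rw [polyad, if_neg hi, mem_sup]

theorem polyad_one {J : Finset V} : F.polyad 1 J = sing (J.sup F.vClass) := if_pos rfl

theorem IsFamily.vClass_eq (hF : F.IsFamily k a) {u v : V} (hu : u ∈ F.gnd)
    (h : v ∈ F.vClass u) : F.vClass v = F.vClass u :=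
  hF.2.2.1 v (hF.2.1 u hu h) u hu h

theorem IsFamily.mem_vClass_iff (hF : F.IsFamily k a) {u v : V} (hu : u ∈ F.gnd)
    (hv : v ∈ F.gnd) : v ∈ F.vClass u ↔ F.vClass v = F.vClass u :=
  ⟨hF.vClass_eq hu, fun h => h ▸ hF.1 v hv⟩

theorem IsFamily.mem_cls_self (hF : F.IsFamily k a) (hj : 2 ≤ j) (hjk : j ≤ k - 1)
    {J : Finset V} (hJ : J ∈ F.cross j) : J ∈ F.cls j J :=
  (hF.2.2.2.2.2 j hj hjk).1 J hJ

theorem IsFamily.cls_eq (hF : F.IsFamily k a) (hj : 2 ≤ j) (hjk : j ≤ k - 1)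
    {I J : Finset V} (hJ : J ∈ F.cross j) (hI : I ∈ F.cls j J) : F.cls j I = F.cls j J :=
  (hF.2.2.2.2.2 j hj hjk).2.1 J hJ I hI

theorem IsFamily.cls_subset_polyCliques (hF : F.IsFamily k a) (hj : 2 ≤ j) (hjk : j ≤ k - 1)
    {J : Finset V} (hJ : J ∈ F.cross j) : F.cls j J ⊆ F.polyCliques j J :=
  (hF.2.2.2.2.2 j hj hjk).2.2.1 J hJ

theorem IsFamily.polyCliques_subset_cross (hF : F.IsFamily k a) (hj : 2 ≤ j) (hjk : j ≤ k - 1)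
    {J : Finset V} (hJ : J ∈ F.cross j) : F.polyCliques j J ⊆ F.cross j :=
  (hF.2.2.2.2.2 j hj hjk).2.2.2.1 J hJ

theorem IsFamily.card_image_cls (hF : F.IsFamily k a) (hj : 2 ≤ j) (hjk : j ≤ k - 1)
    {J : Finset V} (hJ : J ∈ F.cross j) : #((F.polyCliques j J).image (F.cls j)) = a j :=
  (hF.2.2.2.2.2 j hj hjk).2.2.2.2 J hJ

theorem IsFamily.polyad_subset_cross (hF : F.IsFamily k a) (hi : 1 ≤ i) (hik : i ≤ k - 1)
    {J : Finset V} (hJ : J ∈ F.cross j) : F.polyad i J ⊆ F.cross i := by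
  intro T hT
  rcases eq_or_ne i 1 with rfl | h
  · rw [polyad_one, mem_sing] at hT
    obtain ⟨v, hv, rfl⟩ := hT
    obtain ⟨u, hu, hvu⟩ := mem_sup.1 hv
    rw [mem_cross]
    have := hF.2.1 u ((mem_cross.1 hJ).1.1 hu) hvu
    simp [this]
  · obtain ⟨T', hT', hT⟩ := (mem_polyad h).1 hT
    rw [mem_powersetCard] at hT'
    have hc := mem_cross_of_subset hJ hT'.1 hT'.2
    exact hF.polyCliques_subset_cross (by omega) hik hc
      (hF.cls_subset_polyCliques (by omega) hik hc hT)

theorem IsFamily.polyCliques_eq (hF : F.IsFamily k a) (hj : 2 ≤ j) (hjk : j ≤ k)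
    {J : Finset V} (hJ : J ∈ F.cross j) :
    F.polyCliques j J = cliqueSets (F.cross j) (j - 1) (F.polyad (j - 1) J) :=
  KsetC_eq_cliqueSets hj (hF.polyad_subset_cross (by omega) (by omega) hJ)

theorem IsFamily.image_vClass_eq_of_mem_polyCliques (hF : F.IsFamily k a) (hj : 2 ≤ j)
    (hjk : j ≤ k - 1) {I J : Finset V} (hJ : J ∈ F.cross j) (hI : I ∈ F.polyCliques j J) :
    I.image F.vClass = J.image F.vClass := by
  induction j, hj using Nat.le_induction generalizing I J with
  | base =>
    have hIc := hF.polyCliques_subset_cross le_rfl hjk hJ hI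
    refine eq_of_subset_of_card_le ?_
      (by rw [card_image_of_mem_cross hIc, card_image_of_mem_cross hJ])
    rw [hF.polyCliques_eq le_rfl (by omega) hJ, mem_cliqueSets] at hI
    intro C hC
    obtain ⟨v, hv, rfl⟩ := mem_image.1 hC
    have h1 := hI.2 {v} (mem_powersetCard.2 ⟨singleton_subset_iff.2 hv, by simp⟩)
    rw [show 2 - 1 = 1 from rfl, polyad_one, mem_sing] at h1
    obtain ⟨w, hw, hwv⟩ := h1
    rw [singleton_inj] at hwv
    subst hwv
    obtain ⟨u, hu, hvu⟩ := mem_sup.1 hw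
    rw [hF.vClass_eq ((mem_cross.1 hJ).1.1 hu) hvu]
    exact mem_image_of_mem _ hu
  | succ j hj ih =>
    have hIc := hF.polyCliques_subset_cross (by omega) hjk hJ hI
    refine eq_of_subset_of_card_le ?_
      (by rw [card_image_of_mem_cross hIc, card_image_of_mem_cross hJ])
    rw [hF.polyCliques_eq (by omega) (by omega) hJ, mem_cliqueSets, Nat.add_sub_cancel] at hI
    intro C hC
    obtain ⟨v, hv, rfl⟩ := mem_image.1 hC
    obtain ⟨T, hT, hvT⟩ := exists_mem_powersetCard_mem (i := j) hv (by omega)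
      (by have := (mem_cross.1 hIc).1.2; omega)
    obtain ⟨T', hT', hTT'⟩ := (mem_polyad (by omega)).1 (hI.2 T hT)
    rw [mem_powersetCard] at hT'
    have hc := mem_cross_of_subset hJ hT'.1 hT'.2
    have h1 := ih (by omega) hc (hF.cls_subset_polyCliques hj (by omega) hc hTT')
    exact image_subset_image hT'.1 (h1 ▸ mem_image_of_mem _ hvT)

theorem IsFamily.image_vClass_eq_of_mem_cls (hF : F.IsFamily k a) (hj : 2 ≤ j)
    (hjk : j ≤ k - 1) {I J : Finset V} (hJ : J ∈ F.cross j) (hI : I ∈ F.cls j J) :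
    I.image F.vClass = J.image F.vClass :=
  hF.image_vClass_eq_of_mem_polyCliques hj hjk hJ (hF.cls_subset_polyCliques hj hjk hJ hI)

theorem eq_of_image_vClass_eq {K S T : Finset V} (hK : K ∈ F.cross k) (hS : S ⊆ K) (hT : T ⊆ K)
    (h : S.image F.vClass = T.image F.vClass) : S = T := by
  have hinj := (mem_cross.1 hK).2
  ext v
  constructor <;> intro hv
  · obtain ⟨u, hu, huv⟩ := mem_image.1 (h ▸ mem_image_of_mem F.vClass hv)
    rwa [← hinj (hT hu) (hS hv) huv]
  · obtain ⟨u, hu, huv⟩ := mem_image.1 (h.symm ▸ mem_image_of_mem F.vClass hv)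
    rwa [← hinj (hS hu) (hT hv) huv]

/-- Inside the clique set of the polyad of `J ⊆ K`, the polyad of `K` is the class of `J`. -/
theorem IsFamily.mem_polyad_iff_mem_cls (hF : F.IsFamily k a) (hj : 2 ≤ j) (hjk : j ≤ k - 1)
    {K J S : Finset V} (hK : K ∈ F.cross i) (hJ : J ∈ K.powersetCard j)
    (hS : S ∈ F.polyCliques j J) : S ∈ F.polyad j K ↔ S ∈ F.cls j J := by
  rw [mem_polyad (by omega)]
  constructor
  · rintro ⟨T, hT, hST⟩
    rw [mem_powersetCard] at hT hJ
    have h1 := hF.image_vClass_eq_of_mem_cls hj hjk (mem_cross_of_subset hK hT.1 hT.2) hST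
    have h2 := hF.image_vClass_eq_of_mem_polyCliques hj hjk
      (mem_cross_of_subset hK hJ.1 hJ.2) hS
    rwa [← eq_of_image_vClass_eq hK hT.1 hJ.1 (h1.symm.trans h2)]
  · exact fun h => ⟨J, hJ, h⟩

theorem IsFamily.polyad_eq_of_mem_polyCliques (hF : F.IsFamily k a) (hj : 2 ≤ j)
    (hjk : j ≤ k - 1) {I J : Finset V} (hJ : J ∈ F.cross j) (hI : I ∈ F.polyCliques j J) :
    F.polyad (j - 1) I = F.polyad (j - 1) J := by
  have himg := hF.image_vClass_eq_of_mem_polyCliques hj hjk hJ hI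
  rcases eq_or_ne (j - 1) 1 with h1 | h1
  · rw [h1, polyad_one, polyad_one]
    have := congrArg (fun X => X.sup id) himg
    simp only [sup_image, Function.id_comp] at this
    rw [this]
  have hIc := hF.polyCliques_subset_cross hj hjk hJ hI
  rw [hF.polyCliques_eq hj (by omega) hJ, mem_cliqueSets] at hI
  have hT : ∀ T ∈ I.powersetCard (j - 1), ∃ T' ∈ J.powersetCard (j - 1),
      F.cls (j - 1) T = F.cls (j - 1) T' ∧ T.image F.vClass = T'.image F.vClass := by
    intro T hT
    obtain ⟨T', hT', hTT'⟩ := (mem_polyad h1).1 (hI.2 T hT)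
    have hT'' := mem_powersetCard.1 hT'
    have hc := mem_cross_of_subset hJ hT''.1 hT''.2
    exact ⟨T', hT', hF.cls_eq (by omega) (by omega) hc hTT',
      hF.image_vClass_eq_of_mem_cls (by omega) (by omega) hc hTT'⟩
  ext S
  rw [mem_polyad h1, mem_polyad h1]
  constructor
  · rintro ⟨T, hTI, hS⟩
    obtain ⟨T', hT', he, -⟩ := hT T hTI
    exact ⟨T', hT', he ▸ hS⟩
  · rintro ⟨T', hT', hS⟩
    have hT'' := mem_powersetCard.1 hT'
    have hTim : ({v ∈ I | F.vClass v ∈ T'.image F.vClass}).image F.vClass =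
        T'.image F.vClass := by
      refine image_filter_mem F.vClass I ?_
      rw [himg]
      exact image_subset_image hT''.1
    have hTc : {v ∈ I | F.vClass v ∈ T'.image F.vClass} ∈ I.powersetCard (j - 1) := by
      refine mem_powersetCard.2 ⟨filter_subset _ _, ?_⟩
      rw [← card_image_of_injOn ((mem_cross.1 hIc).2.mono (filter_subset _ _)), hTim,
        card_image_of_mem_cross (mem_cross_of_subset hJ hT''.1 hT''.2)]
    obtain ⟨T2, hT2, he, hi⟩ := hT _ hTc
    refine ⟨_, hTc, ?_⟩
    rw [he, eq_of_image_vClass_eq hJ (mem_powersetCard.1 hT2).1 hT''.1 (hi.symm.trans hTim)]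
    exact hS

theorem IsFamily.exists_cross_superset (hF : F.IsFamily k a) {J : Finset V}
    (hJ : J ∈ F.cross j) (hjk : j ≤ k) : ∃ K ∈ F.cross k, J ⊆ K := by
  have hk : k ≤ #(F.gnd.image F.vClass) := hF.2.2.2.1.symm ▸ hF.2.2.2.2.1
  suffices ∀ m, j ≤ m → m ≤ k → ∃ K ∈ F.cross m, J ⊆ K from this k hjk le_rfl
  intro m hm
  induction m, hm using Nat.le_induction with
  | base => exact fun _ => ⟨J, hJ, subset_rfl⟩
  | succ m hm ih =>
    intro hmk
    obtain ⟨K, hK, hJK⟩ := ih (by omega)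
    obtain ⟨C, hC, hCK⟩ := exists_mem_notMem_of_card_lt_card
      (show #(K.image F.vClass) < #(F.gnd.image F.vClass) by
        rw [card_image_of_mem_cross hK]; omega)
    obtain ⟨v, hv, rfl⟩ := mem_image.1 hC
    have hvK : v ∉ K := fun h => hCK (mem_image_of_mem _ h)
    rw [mem_cross] at hK
    refine ⟨insert v K, mem_cross.2 ⟨⟨insert_subset hv hK.1.1, ?_⟩, ?_⟩,
      hJK.trans (subset_insert _ _)⟩
    · rw [card_insert_of_notMem hvK, hK.1.2]
    · rw [coe_insert, Set.injOn_insert (by simpa using hvK)]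
      exact ⟨hK.2, fun ⟨u, hu, h⟩ => hCK (mem_image.2 ⟨u, hu, h⟩)⟩

theorem IsFamily.abs_card_cls_inter_le (hF : F.IsFamily k a) {ε : ℝ} (hε : 0 < ε)
    (hreg : F.PolyadReg k a ε) (hj : 2 ≤ j) (hjk : j ≤ k - 1) (ha : 1 ≤ a j) {J : Finset V}
    (hJ : J ∈ F.cross j) {R : Finset (Finset V)} (hR : R ⊆ F.polyad (j - 1) J) :
    |(#(F.cls j J ∩ cliqueSets (F.cross j) (j - 1) R) : ℝ) -
      #(cliqueSets (F.cross j) (j - 1) R) / a j| ≤ ε * (#F.gnd : ℝ) ^ j := by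
  obtain ⟨K, hK, hJK⟩ := hF.exists_cross_superset hJ (by omega)
  have hJ' : J ∈ K.powersetCard j := mem_powersetCard.2 ⟨hJK, (mem_cross.1 hJ).1.2⟩
  have hpc : F.polyad (j - 1) J ⊆ F.cross (j - 1) :=
    hF.polyad_subset_cross (by omega) (by omega) hJ
  have h1 := hreg K hK j hj hjk J hJ' R hR
  rw [Nat.sub_add_cancel (by omega : 1 ≤ j), KsetC_eq_cliqueSets hj (hR.trans hpc),
    KsetC_eq_cliqueSets hj hpc] at h1
  have hcl : F.polyad j K ∩ cliqueSets (F.cross j) (j - 1) R =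
      F.cls j J ∩ cliqueSets (F.cross j) (j - 1) R := by
    ext S
    rw [mem_inter, mem_inter]
    refine and_congr_left fun hS => ?_
    refine hF.mem_polyad_iff_mem_cls hj hjk hK hJ' ?_
    rw [hF.polyCliques_eq hj (by omega) hJ]
    rw [mem_cliqueSets] at hS ⊢
    exact ⟨hS.1, fun T hT => hR (hS.2 T hT)⟩
  rw [hcl] at h1
  have hcard : ∀ R' : Finset (Finset V),
      (#(cliqueSets (F.cross j) (j - 1) R') : ℝ) ≤ (#F.gnd : ℝ) ^ j := by
    intro R'
    have h2 : cliqueSets (F.cross j) (j - 1) R' ⊆ F.gnd.powersetCard j :=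
      (filter_subset _ _).trans (filter_subset _ _)
    have h3 := card_le_card h2
    rw [card_powersetCard] at h3
    exact_mod_cast h3.trans (Nat.choose_le_pow _ _)
  have ha' : (1 : ℝ) ≤ a j := by exact_mod_cast ha
  by_cases hlarge : ε * (#(cliqueSets (F.cross j) (j - 1) (F.polyad (j - 1) J)) : ℝ) ≤
      #(cliqueSets (F.cross j) (j - 1) R)
  · have h2 := h1 hlarge
    rw [one_div, inv_mul_eq_div] at h2
    exact h2.trans (mul_le_mul_of_nonneg_left (hcard R) hε.le)
  · push Not at hlarge
    have h2 := hlarge.le.trans (mul_le_mul_of_nonneg_left (hcard _) hε.le)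
    have h3 : (#(F.cls j J ∩ cliqueSets (F.cross j) (j - 1) R) : ℝ) ≤
        #(cliqueSets (F.cross j) (j - 1) R) := by
      exact_mod_cast card_le_card inter_subset_right
    have h4 : (#(cliqueSets (F.cross j) (j - 1) R) : ℝ) / a j ≤
        #(cliqueSets (F.cross j) (j - 1) R) := div_le_self (by positivity) ha'
    have h5 : 0 ≤ (#(cliqueSets (F.cross j) (j - 1) R) : ℝ) / a j := by positivity
    have h6 : 0 ≤ (#(F.cls j J ∩ cliqueSets (F.cross j) (j - 1) R) : ℝ) := by positivity
    rw [abs_le]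
    constructor <;> linarith

end PartFam

end Families

section Coloured

variable {V : Type*}

theorem filter_mem_eq_filter_mem_inter_image {f : V → ℕ} {S T : Finset V} (hTS : T ⊆ S)
    (hf : Set.InjOn f S) (M : Finset ℕ) :
    {v ∈ T | f v ∈ M} = {v ∈ S | f v ∈ M ∩ T.image f} := by
  ext v
  simp only [mem_filter, mem_inter]
  constructor
  · rintro ⟨h1, h2⟩
    exact ⟨hTS h1, h2, mem_image_of_mem _ h1⟩
  · rintro ⟨h1, h2, h3⟩
    obtain ⟨u, hu, huv⟩ := mem_image.1 h3
    exact ⟨hf (hTS hu) h1 huv ▸ hu, h2⟩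

theorem card_image_eq_of_eq_iff {α β γ : Type*} [DecidableEq β] [DecidableEq γ] {s : Finset α}
    {f : α → β} {g : α → γ} (h : ∀ x ∈ s, ∀ y ∈ s, f x = f y ↔ g x = g y) :
    #(s.image f) = #(s.image g) := by
  classical
  have h1 : (s.image fun x => (f x, g x)).image Prod.fst = s.image f := by
    rw [image_image]; rfl
  have h2 : (s.image fun x => (f x, g x)).image Prod.snd = s.image g := by
    rw [image_image]; rfl
  rw [← h1, ← h2, card_image_of_injOn (f := Prod.fst), card_image_of_injOn (f := Prod.snd)]
  all_goals
    intro p hp q hq hpq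
    obtain ⟨x, hx, rfl⟩ := mem_image.1 (mem_coe.1 hp)
    obtain ⟨y, hy, rfl⟩ := mem_image.1 (mem_coe.1 hq)
    have := h x hx y hy
    simp_all

/-- The address of a set: its vertex colours and the labels of its subsets, indexed by the
vertex colours they carry. -/
def colAddr (vcol : V → ℕ) (lab : Finset V → ℕ) (S : Finset V) : Finset ℕ × (Finset ℕ → ℕ) :=
  (S.image vcol, fun M => lab {v ∈ S | vcol v ∈ M})

/-- The addresses of `I` and `J` agree below the top level. -/
def SamePolyad (vcol : V → ℕ) (lab : Finset V → ℕ) (I J : Finset V) : Prop :=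
  I.image vcol = J.image vcol ∧
    ∀ M, ¬ J.image vcol ⊆ M → lab {v ∈ I | vcol v ∈ M} = lab {v ∈ J | vcol v ∈ M}

theorem SamePolyad.symm {vcol : V → ℕ} {lab : Finset V → ℕ} {I J : Finset V}
    (h : SamePolyad vcol lab I J) : SamePolyad vcol lab J I :=
  ⟨h.1.symm, fun M hM => (h.2 M (h.1 ▸ hM)).symm⟩

theorem SamePolyad.trans {vcol : V → ℕ} {lab : Finset V → ℕ} {I J K : Finset V}
    (h : SamePolyad vcol lab I J) (h' : SamePolyad vcol lab J K) : SamePolyad vcol lab I K :=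
  ⟨h.1.trans h'.1, fun M hM => (h.2 M (h'.1.symm ▸ hM)).trans (h'.2 M hM)⟩

theorem colAddr_eq_iff {vcol : V → ℕ} {lab : Finset V → ℕ} {S J : Finset V} :
    colAddr vcol lab S = colAddr vcol lab J ↔ SamePolyad vcol lab S J ∧ lab S = lab J := by
  rw [colAddr, colAddr, Prod.mk.injEq]
  have hfull : ∀ {T : Finset V} {M : Finset ℕ}, T.image vcol ⊆ M → {v ∈ T | vcol v ∈ M} = T :=
    fun h => filter_true_of_mem fun v hv => h (mem_image_of_mem _ hv)
  constructor
  · rintro ⟨h1, h2⟩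
    refine ⟨⟨h1, fun M _ => congrFun h2 M⟩, ?_⟩
    have h3 := congrFun h2 (J.image vcol)
    rwa [hfull h1.subset, hfull subset_rfl] at h3
  · rintro ⟨⟨h1, h2⟩, h3⟩
    refine ⟨h1, funext fun M => ?_⟩
    by_cases hM : J.image vcol ⊆ M
    · rw [hfull hM, hfull (h1.subset.trans hM), h3]
    · exact h2 M hM

variable [DecidableEq V]

open scoped Classical in
/-- The family of partitions determined by a vertex colouring and a labelling of sets. -/
noncomputable def colFam (W : Finset V) (vcol : V → ℕ) (lab : Finset V → ℕ) : PartFam V where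
  gnd := W
  vClass v := {u ∈ W | vcol u = vcol v}
  cls j J := {I ∈ W.powersetCard j | Set.InjOn vcol I ∧ colAddr vcol lab I = colAddr vcol lab J}

namespace colFam

variable {W : Finset V} {vcol : V → ℕ} {lab : Finset V → ℕ} {i j : ℕ}

theorem vClass_eq_iff {u v : V} (hu : u ∈ W) :
    (colFam W vcol lab).vClass u = (colFam W vcol lab).vClass v ↔ vcol u = vcol v := by
  constructor
  · intro h
    have : u ∈ (colFam W vcol lab).vClass v := h ▸ mem_filter.2 ⟨hu, rfl⟩
    exact (mem_filter.1 this).2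
  · intro h
    simp only [colFam, h]

theorem mem_cross {S : Finset V} :
    S ∈ (colFam W vcol lab).cross i ↔ (S ⊆ W ∧ #S = i) ∧ Set.InjOn vcol S := by
  rw [PartFam.mem_cross]
  refine and_congr_right fun hS => ?_
  constructor
  · exact fun h u hu v hv huv => h hu hv ((vClass_eq_iff (hS.1 hu)).2 huv)
  · exact fun h u hu v hv huv => h hu hv ((vClass_eq_iff (hS.1 hu)).1 huv)

theorem card_image_of_mem_cross {S : Finset V} (hS : S ∈ (colFam W vcol lab).cross i) :
    #(S.image vcol) = i := by
  rw [mem_cross] at hS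
  rw [card_image_of_injOn hS.2, hS.1.2]

theorem mem_cls {I J : Finset V} : I ∈ (colFam W vcol lab).cls j J ↔
    I ∈ (colFam W vcol lab).cross j ∧ colAddr vcol lab I = colAddr vcol lab J := by
  rw [mem_cross, ← mem_powersetCard, and_assoc]
  classical exact mem_filter

theorem mem_polyad (hlab : ∀ S, #S ≤ 1 → lab S = 0) {J T : Finset V} :
    T ∈ (colFam W vcol lab).polyad i J ↔ T ∈ (colFam W vcol lab).cross i ∧
      ∃ T' ∈ J.powersetCard i, colAddr vcol lab T = colAddr vcol lab T' := by
  rcases eq_or_ne i 1 with rfl | hi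
  · rw [PartFam.polyad_one, mem_sing]
    constructor
    · rintro ⟨v, hv, rfl⟩
      obtain ⟨u, hu, hvu⟩ := mem_sup.1 hv
      obtain ⟨hvW, hvu⟩ := mem_filter.1 hvu
      refine ⟨mem_cross.2 (by simp [hvW]), {u}, by simpa using hu, ?_⟩
      rw [colAddr, colAddr, Prod.mk.injEq]
      refine ⟨by simp [hvu], funext fun M => ?_⟩
      rw [hlab _ ((card_filter_le _ _).trans (by simp)),
        hlab _ ((card_filter_le _ _).trans (by simp))]
    · rintro ⟨hT, T', hT', h⟩
      rw [mem_cross] at hT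
      rw [mem_powersetCard] at hT'
      obtain ⟨v, rfl⟩ := card_eq_one.1 hT.1.2
      obtain ⟨u, rfl⟩ := card_eq_one.1 hT'.2
      have h1 := congrArg Prod.fst h
      simp only [colAddr, image_singleton, singleton_inj] at h1
      exact ⟨v, mem_sup.2 ⟨u, by simpa using hT'.1, mem_filter.2 ⟨by simpa using hT.1.1, h1⟩⟩,
        rfl⟩
  · rw [PartFam.mem_polyad hi]
    simp only [mem_cls]
    constructor
    · rintro ⟨T', hT', h1, h2⟩
      exact ⟨h1, T', hT', h2⟩
    · rintro ⟨h1, T', hT', h2⟩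
      exact ⟨T', hT', h1, h2⟩

theorem polyad_subset_cross (hlab : ∀ S, #S ≤ 1 → lab S = 0) {J : Finset V} :
    (colFam W vcol lab).polyad i J ⊆ (colFam W vcol lab).cross i :=
  fun _ hT => ((mem_polyad hlab).1 hT).1

theorem forall_mem_polyad_iff (hlab : ∀ S, #S ≤ 1 → lab S = 0) (hj : 2 ≤ j) {S J : Finset V}
    (hS : S ∈ (colFam W vcol lab).cross j) (hJ : J ∈ (colFam W vcol lab).cross j) :
    (∀ T ∈ S.powersetCard (j - 1), T ∈ (colFam W vcol lab).polyad (j - 1) J) ↔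
      SamePolyad vcol lab S J := by
  have hSi := card_image_of_mem_cross hS
  have hJi := card_image_of_mem_cross hJ
  have hS' := mem_cross.1 hS
  have hJ' := mem_cross.1 hJ
  constructor
  · intro h
    have himg : S.image vcol = J.image vcol := by
      refine eq_of_subset_of_card_le ?_ (by rw [hSi, hJi])
      intro c hc
      obtain ⟨v, hv, rfl⟩ := mem_image.1 hc
      obtain ⟨T, hT, hvT⟩ := exists_mem_powersetCard_mem (i := j - 1) hv (by omega) (by omega)
      obtain ⟨-, T', hT', he⟩ := (mem_polyad hlab).1 (h T hT)
      have h1 : T.image vcol = T'.image vcol := congrArg Prod.fst he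
      exact image_subset_image (mem_powersetCard.1 hT').1 (h1 ▸ mem_image_of_mem _ hvT)
    refine ⟨himg, fun M hM => ?_⟩
    obtain ⟨c, hc, hcM⟩ := not_subset.1 hM
    obtain ⟨x, hx, rfl⟩ := mem_image.1 (himg ▸ hc)
    obtain ⟨-, T', hT', he⟩ := (mem_polyad hlab).1
      (h (S.erase x) (mem_powersetCard.2 ⟨erase_subset _ _, by rw [card_erase_of_mem hx]; omega⟩))
    have h1 : (S.erase x).image vcol = T'.image vcol := congrArg Prod.fst he
    have h2 : lab {v ∈ S.erase x | vcol v ∈ M} = lab {v ∈ T' | vcol v ∈ M} :=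
      congrFun (congrArg Prod.snd he) M
    have h3 : {v ∈ S.erase x | vcol v ∈ M} = {v ∈ S | vcol v ∈ M} := by
      ext v
      simp only [mem_filter, mem_erase]
      constructor
      · exact fun hv => ⟨hv.1.2, hv.2⟩
      · exact fun hv => ⟨⟨fun hvx => hcM (hvx ▸ hv.2), hv.1⟩, hv.2⟩
    have h4 : {v ∈ T' | vcol v ∈ M} = {v ∈ J | vcol v ∈ M} := by
      have hT'J := (mem_powersetCard.1 hT').1
      ext v
      simp only [mem_filter]
      refine and_congr_left fun hvM => ⟨fun hv => hT'J hv, fun hv => ?_⟩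
      obtain ⟨u, hu, huv⟩ := mem_image.1 (himg.symm ▸ mem_image_of_mem vcol hv)
      have hux : u ≠ x := by
        rintro rfl
        exact hcM (huv ▸ hvM)
      obtain ⟨w, hw, hwu⟩ := mem_image.1 (h1 ▸ mem_image_of_mem vcol (mem_erase.2 ⟨hux, hu⟩))
      exact hJ'.2 (hT'J hw) hv (hwu.trans huv) ▸ hw
    rw [← h3, ← h4, h2]
  · rintro ⟨himg, hlabs⟩ T hT
    rw [mem_powersetCard] at hT
    have hTc : T.image vcol ⊆ J.image vcol := himg ▸ image_subset_image hT.1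
    have hTi := image_filter_mem vcol J hTc
    have hTk : #(T.image vcol) = j - 1 := by
      rw [card_image_of_injOn (hS'.2.mono hT.1), hT.2]
    refine (mem_polyad hlab).2 ⟨PartFam.mem_cross_of_subset hS hT.1 hT.2,
      {v ∈ J | vcol v ∈ T.image vcol}, mem_powersetCard.2 ⟨filter_subset _ _, ?_⟩, ?_⟩
    · rw [← card_image_of_injOn (hJ'.2.mono (filter_subset _ _)), hTi, hTk]
    · rw [colAddr, colAddr, Prod.mk.injEq, hTi]
      refine ⟨rfl, funext fun M => ?_⟩
      rw [filter_mem_eq_filter_mem_inter_image hT.1 hS'.2,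
        filter_mem_eq_filter_mem_inter_image (filter_subset _ _) hJ'.2, hTi]
      refine hlabs _ fun hsub => ?_
      have := card_le_card (hsub.trans inter_subset_right)
      omega

theorem mem_polyCliques (hlab : ∀ S, #S ≤ 1 → lab S = 0) (hj : 2 ≤ j) {S J : Finset V}
    (hJ : J ∈ (colFam W vcol lab).cross j) :
    S ∈ (colFam W vcol lab).polyCliques j J ↔
      S ∈ (colFam W vcol lab).cross j ∧ SamePolyad vcol lab S J := by
  rw [PartFam.polyCliques, PartFam.KsetC_eq_cliqueSets hj (polyad_subset_cross hlab),
    mem_cliqueSets]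
  exact and_congr_right fun hS => forall_mem_polyad_iff hlab hj hS hJ

theorem isFamily {k : ℕ} {b : ℕ → ℕ} (hlab : ∀ S, #S ≤ 1 → lab S = 0) (hk : k ≤ b 1)
    (hcol : W.image vcol = range (b 1))
    (hsurj : ∀ j, 2 ≤ j → j ≤ k - 1 → ∀ J ∈ (colFam W vcol lab).cross j,
      ((colFam W vcol lab).polyCliques j J).image lab = range (b j)) :
    (colFam W vcol lab).IsFamily k b := by
  refine ⟨fun v hv => mem_filter.2 ⟨hv, rfl⟩, fun v _ => filter_subset _ _,
    fun u hu v _ huv => (vClass_eq_iff hu).2 (mem_filter.1 huv).2, ?_, hk,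
    fun j hj hjk => ⟨fun J hJ => mem_cls.2 ⟨hJ, rfl⟩, ?_, ?_, ?_, ?_⟩⟩
  · rw [← card_range (b 1), ← hcol]
    exact card_image_eq_of_eq_iff fun u hu v _ => vClass_eq_iff hu
  · intro J hJ I hI
    have h := (mem_cls.1 hI).2
    ext S
    rw [mem_cls, mem_cls, h]
  · intro J hJ I hI
    rw [mem_cls, colAddr_eq_iff] at hI
    exact (mem_polyCliques hlab hj hJ).2 ⟨hI.1, hI.2.1⟩
  · exact fun J hJ I hI => ((mem_polyCliques hlab hj hJ).1 hI).1
  · intro J hJ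
    rw [← card_range (b j), ← hsurj j hj hjk J hJ]
    refine card_image_eq_of_eq_iff fun S hS T hT => ?_
    rw [mem_polyCliques hlab hj hJ] at hS hT
    constructor
    · intro h
      have : S ∈ (colFam W vcol lab).cls j T := h ▸ mem_cls.2 ⟨hS.1, rfl⟩
      exact (colAddr_eq_iff.1 (mem_cls.1 this).2).2
    · intro h
      have h1 := colAddr_eq_iff.2 ⟨hS.2.trans hT.2.symm, h⟩
      ext I
      rw [mem_cls, mem_cls, h1]

end colFam

end Coloured

section Counting

open scoped Classical

variable {V : Type*} {W : Finset V} {vcol : V → ℕ} {lab : Finset V → ℕ}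

/-- The crossing sets with the same vertex colours as `J` whose labels at the colour sets in
`𝒰` agree with those of `J`. -/
noncomputable def agreeing (W : Finset V) (vcol : V → ℕ) (lab : Finset V → ℕ) (J : Finset V)
    (𝒰 : Finset (Finset ℕ)) : Finset (Finset V) :=
  {I ∈ W.powersetCard #J | Set.InjOn vcol I ∧ I.image vcol = J.image vcol ∧
    ∀ M ∈ 𝒰, lab {v ∈ I | vcol v ∈ M} = lab {v ∈ J | vcol v ∈ M}}

theorem mem_agreeing {I J : Finset V} {𝒰 : Finset (Finset ℕ)} :
    I ∈ agreeing W vcol lab J 𝒰 ↔ (I ⊆ W ∧ #I = #J) ∧ Set.InjOn vcol I ∧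
      I.image vcol = J.image vcol ∧
        ∀ M ∈ 𝒰, lab {v ∈ I | vcol v ∈ M} = lab {v ∈ J | vcol v ∈ M} := by
  rw [agreeing, mem_filter, mem_powersetCard]

theorem agreeing_insert {J : Finset V} {𝒰 : Finset (Finset ℕ)} {M : Finset ℕ} :
    agreeing W vcol lab J (insert M 𝒰) =
      {I ∈ agreeing W vcol lab J 𝒰 |
        lab {v ∈ I | vcol v ∈ M} = lab {v ∈ J | vcol v ∈ M}} := by
  ext I
  rw [mem_filter, mem_agreeing, mem_agreeing, forall_mem_insert]
  tauto

variable [DecidableEq V]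

/-- Inside every polyad and every collection of clique sets, each of the `b j` labels is
attained by the right proportion of the `j`-sets, up to `δ * #W ^ j` of them. -/
def Balanced (W : Finset V) (vcol : V → ℕ) (lab : Finset V → ℕ) (k : ℕ) (b : ℕ → ℕ)
    (δ : ℝ) : Prop :=
  ∀ j, 2 ≤ j → j ≤ k - 1 → ∀ J ∈ (colFam W vcol lab).cross j, ∀ R : Finset (Finset V),
    ∀ ℓ < b j,
      |(#{S ∈ cliqueSets ((colFam W vcol lab).cross j) (j - 1) R |
          SamePolyad vcol lab S J ∧ lab S = ℓ} : ℝ) -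
        #{S ∈ cliqueSets ((colFam W vcol lab).cross j) (j - 1) R | SamePolyad vcol lab S J} /
          b j| ≤ δ * (#W : ℝ) ^ j

theorem pow_le_card_agreeing_empty {J : Finset V} (hJ : Set.InjOn vcol J) {q : ℕ}
    (hq : ∀ c ∈ J.image vcol, q ≤ #{u ∈ W | vcol u = c}) :
    q ^ #J ≤ #(agreeing W vcol lab J ∅) := by
  have hC : #(J.image vcol) = #J := card_image_of_injOn hJ
  calc q ^ #J = ∏ c ∈ J.image vcol, q := by rw [prod_const, hC]
    _ ≤ ∏ c ∈ J.image vcol, #{u ∈ W | vcol u = c} := prod_le_prod' hq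
    _ = #((J.image vcol).pi fun c => {u ∈ W | vcol u = c}) := (card_pi _ _).symm
    _ ≤ #(agreeing W vcol lab J ∅) := by
      refine card_le_card_of_injOn (fun f => (J.image vcol).attach.image fun c => f c.1 c.2)
        (fun f hf => ?_) (fun f hf g hg hfg => ?_)
      · have hf' : ∀ c (hc : c ∈ J.image vcol), f c hc ∈ W ∧ vcol (f c hc) = c :=
          fun c hc => mem_filter.1 (Finset.mem_pi.1 (mem_coe.1 hf) c hc)
        have hsub : ((J.image vcol).attach.image fun c => f c.1 c.2) ⊆ W :=
          image_subset_iff.2 fun c _ => (hf' c.1 c.2).1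
        have himg : ((J.image vcol).attach.image fun c => f c.1 c.2).image vcol =
            J.image vcol := by
          ext c
          simp only [image_image, mem_image, mem_attach, true_and, Subtype.exists,
            Function.comp_apply]
          constructor
          · rintro ⟨c', hc', h⟩
            rw [(hf' c' (mem_image.2 hc')).2] at h
            exact h ▸ hc'
          · exact fun hc => ⟨c, hc, (hf' c (mem_image.2 hc)).2⟩
        have hle : #((J.image vcol).attach.image fun c => f c.1 c.2) ≤ #J :=
          card_image_le.trans (by rw [card_attach, hC])
        have hge : #J ≤ #((J.image vcol).attach.image fun c => f c.1 c.2) := by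
          have h := card_image_le (s := (J.image vcol).attach.image fun c => f c.1 c.2)
            (f := vcol)
          rwa [himg, hC] at h
        refine mem_coe.2 (mem_agreeing.2 ⟨⟨hsub, hle.antisymm hge⟩, ?_, himg, by simp⟩)
        refine card_image_iff.1 ?_
        rw [himg, hC]
        exact (hle.antisymm hge).symm
      · have hf' := fun c (hc : c ∈ J.image vcol) =>
          (mem_filter.1 (Finset.mem_pi.1 (mem_coe.1 hf) c hc)).2
        have hg' := fun c (hc : c ∈ J.image vcol) =>
          (mem_filter.1 (Finset.mem_pi.1 (mem_coe.1 hg) c hc)).2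
        funext c hc
        have h1 : f c hc ∈ (J.image vcol).attach.image fun c => g c.1 c.2 := by
          have : f c hc ∈ (J.image vcol).attach.image fun c => f c.1 c.2 :=
            mem_image.2 ⟨⟨c, hc⟩, mem_attach _ _, rfl⟩
          simp only at hfg
          rwa [hfg] at this
        obtain ⟨⟨c', hc'⟩, -, h2⟩ := mem_image.1 h1
        have : c' = c := by rw [← hg' c' hc', ← hf' c hc, ← h2]
        subst this
        exact h2.symm

/-- Extending a set `X` with vertex colours `M` by a fixed set `Y` carrying the remaining
vertex colours of `J`. -/
theorem exists_card_filter_agreeing_eq (hlab : ∀ S, #S ≤ 1 → lab S = 0) {J : Finset V}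
    (hJ : Set.InjOn vcol J) {𝒰 : Finset (Finset ℕ)} {M : Finset ℕ} (hM : M ⊆ J.image vcol)
    (hM𝒰 : M ∉ 𝒰)
    (hmax : ∀ M' ∈ 𝒰, #M' ≤ #M) (hdown : ∀ D ⊆ M, D ≠ M → 2 ≤ #D → D ∈ 𝒰)
    {Y : Finset V} (hYW : Y ⊆ W) (hY : Set.InjOn vcol Y) (hYM : Y.image vcol = J.image vcol \ M) :
    ∃ R : Finset (Finset V), ∀ (p : Finset V → Prop) [DecidablePred p],
      #{I ∈ agreeing W vcol lab J 𝒰 |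
          ({v ∈ I | vcol v ∉ M} : Finset V) = Y ∧ p {v ∈ I | vcol v ∈ M}} =
        #{X ∈ cliqueSets ((colFam W vcol lab).cross #M) (#M - 1) R |
          SamePolyad vcol lab X {v ∈ J | vcol v ∈ M} ∧ p X} := by
  have hJM := image_filter_mem vcol J hM
  refine ⟨{T ∈ W.powersetCard (#M - 1) | ∀ M' ∈ 𝒰, M' ∩ M ⊆ T.image vcol →
    lab {v ∈ T ∪ Y | vcol v ∈ M'} = lab {v ∈ J | vcol v ∈ M'}}, fun p _ => ?_⟩
  have hYm : ∀ v ∈ Y, vcol v ∉ M := fun v hv =>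
    (mem_sdiff.1 (hYM ▸ mem_image_of_mem vcol hv)).2
  have hinM : ∀ X : Finset V, X.image vcol = M → {v ∈ X ∪ Y | vcol v ∈ M} = X := by
    rintro X rfl
    ext v
    simp only [mem_filter, mem_union]
    exact ⟨fun h => h.1.resolve_right fun hv => hYm v hv h.2,
      fun h => ⟨Or.inl h, mem_image_of_mem _ h⟩⟩
  have hproper : ∀ M' ∈ 𝒰, ¬ M ⊆ M' := fun M' hM' h =>
    hM𝒰 (eq_of_subset_of_card_le h (hmax M' hM') ▸ hM')
  refine card_nbij' (fun I => {v ∈ I | vcol v ∈ M}) (fun X => X ∪ Y) ?_ ?_ ?_ ?_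
  · intro I hI
    obtain ⟨hIa, rfl, hp⟩ := mem_filter.1 (mem_coe.1 hI)
    obtain ⟨⟨hIW, hIJ⟩, hIinj, hIi, hI𝒰⟩ := mem_agreeing.1 hIa
    have hXi : {v ∈ I | vcol v ∈ M}.image vcol = M := image_filter_mem vcol I (hIi ▸ hM)
    have hXinj : Set.InjOn vcol ({v ∈ I | vcol v ∈ M} : Finset V) := hIinj.mono (filter_subset _ _)
    refine mem_coe.2 (mem_filter.2 ⟨mem_cliqueSets.2 ⟨colFam.mem_cross.2
      ⟨⟨(filter_subset _ _).trans hIW, ?_⟩, hXinj⟩, fun T hT => ?_⟩, ⟨hXi.trans hJM.symm,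
        fun M' hM' => ?_⟩, hp⟩)
    · rw [← card_image_of_injOn hXinj, hXi]
    · rw [mem_powersetCard] at hT
      refine mem_filter.2 ⟨mem_powersetCard.2 ⟨hT.1.trans ((filter_subset _ _).trans hIW), hT.2⟩,
        fun M' hM' hMT => ?_⟩
      rw [← hI𝒰 M' hM']
      congr 1
      ext v
      simp only [mem_filter, mem_union]
      refine and_congr_left fun hvM' => ⟨?_, fun hv => ?_⟩
      · rintro (hv | hv)
        · exact (mem_filter.1 (hT.1 hv)).1
        · exact hv.1
      · by_cases hvM : vcol v ∈ M
        · obtain ⟨u, hu, huv⟩ := mem_image.1 (hMT (mem_inter.2 ⟨hvM', hvM⟩))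
          exact Or.inl (hIinj (mem_filter.1 (hT.1 hu)).1 hv huv ▸ hu)
        · exact Or.inr ⟨hv, hvM⟩
    · rw [hJM] at hM'
      have key : ∀ S : Finset V,
          {v ∈ {v ∈ S | vcol v ∈ M} | vcol v ∈ M'} = {v ∈ S | vcol v ∈ M ∩ M'} := fun S => by
        simp only [filter_filter, mem_inter]
      rw [key, key]
      by_cases h2 : 2 ≤ #(M ∩ M')
      · exact hI𝒰 _ (hdown _ inter_subset_left (fun h => hM' (inter_eq_left.1 h)) h2)
      · have hsmall : ∀ S : Finset V, Set.InjOn vcol S → lab {v ∈ S | vcol v ∈ M ∩ M'} = 0 := by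
          intro S hS
          refine hlab _ ?_
          rw [← card_image_of_injOn (hS.mono (filter_subset _ _))]
          refine (card_le_card (image_subset_iff.2 fun v hv => (mem_filter.1 hv).2)).trans ?_
          omega
        rw [hsmall I hIinj, hsmall J hJ]
  · intro X hX
    obtain ⟨hX, ⟨hXi, hXlab⟩, hp⟩ := mem_filter.1 (mem_coe.1 hX)
    obtain ⟨hXc, hXR⟩ := mem_cliqueSets.1 hX
    obtain ⟨⟨hXW, hXM⟩, hXinj⟩ := colFam.mem_cross.1 hXc
    rw [hJM] at hXi
    have himg : (X ∪ Y).image vcol = J.image vcol := by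
      rw [image_union, hXi, hYM, union_sdiff_of_subset hM]
    have hinj : Set.InjOn vcol ((X ∪ Y : Finset V) : Set V) := by
      intro u hu v hv huv
      have hXm : ∀ v ∈ X, vcol v ∈ M := fun v hv => hXi ▸ mem_image_of_mem _ hv
      rcases mem_union.1 (mem_coe.1 hu) with hu | hu <;>
        rcases mem_union.1 (mem_coe.1 hv) with hv | hv
      · exact hXinj hu hv huv
      · exact absurd (huv ▸ hXm u hu) (hYm v hv)
      · exact absurd (huv ▸ hXm v hv) (hYm u hu)
      · exact hY hu hv huv
    refine mem_coe.2 (mem_filter.2 ⟨mem_agreeing.2 ⟨⟨union_subset hXW hYW, ?_⟩, hinj, himg,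
      fun M' hM' => ?_⟩, ?_, ?_⟩)
    · rw [← card_image_of_injOn hinj, himg, card_image_of_injOn hJ]
    · obtain ⟨c, hcM, hcM'⟩ := not_subset.1 (hproper M' hM')
      obtain ⟨x, hx, rfl⟩ := mem_image.1 (hXi.symm ▸ hcM)
      have hT : X.erase x ∈ X.powersetCard (#M - 1) :=
        mem_powersetCard.2 ⟨erase_subset _ _, by rw [card_erase_of_mem hx, hXM]⟩
      rw [← (mem_filter.1 (hXR _ hT)).2 M' hM' fun c hc => ?_]
      · congr 1
        ext v
        simp only [mem_filter, mem_union, mem_erase]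
        refine and_congr_left fun hv => or_congr_left ⟨fun h => ⟨?_, h⟩, fun h => h.2⟩
        rintro rfl
        exact hcM' hv
      · rw [mem_inter] at hc
        obtain ⟨u, hu, rfl⟩ := mem_image.1 (hXi.symm ▸ hc.2)
        refine mem_image_of_mem _ (mem_erase.2 ⟨?_, hu⟩)
        rintro rfl
        exact hcM' hc.1
    · ext v
      simp only [mem_filter, mem_union]
      constructor
      · exact fun h => h.1.resolve_left fun hv => h.2 (hXi ▸ mem_image_of_mem _ hv)
      · exact fun h => ⟨Or.inr h, hYm v h⟩
    · rwa [hinM X hXi]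
  · intro I hI
    obtain ⟨-, rfl, -⟩ := mem_filter.1 (mem_coe.1 hI)
    exact filter_union_filter_not_eq _ _
  · intro X hX
    obtain ⟨-, ⟨hXi, -⟩, -⟩ := mem_filter.1 (mem_coe.1 hX)
    exact hinM X (hXi.trans hJM)

end Counting

section Counting

open scoped Classical

variable {V : Type*} [DecidableEq V] {W : Finset V} {vcol : V → ℕ} {lab : Finset V → ℕ}
  {k : ℕ} {b : ℕ → ℕ} {δ : ℝ}

theorem Balanced.abs_card_agreeing_insert_le (h : Balanced W vcol lab k b δ) (hδ : 0 ≤ δ)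
    (hlab : ∀ S, #S ≤ 1 → lab S = 0) (hlt : ∀ S, 2 ≤ #S → #S ≤ k - 1 → lab S < b #S)
    {J : Finset V} (hJW : J ⊆ W) (hJ : Set.InjOn vcol J) {𝒰 : Finset (Finset ℕ)}
    {M : Finset ℕ} (hM : M ⊆ J.image vcol) (hM2 : 2 ≤ #M) (hMk : #M ≤ k - 1) (hM𝒰 : M ∉ 𝒰)
    (hmax : ∀ M' ∈ 𝒰, #M' ≤ #M) (hdown : ∀ D ⊆ M, D ≠ M → 2 ≤ #D → D ∈ 𝒰) :
    |(#(agreeing W vcol lab J (insert M 𝒰)) : ℝ) - #(agreeing W vcol lab J 𝒰) / b #M| ≤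
      δ * (#W : ℝ) ^ #J := by
  have hJM := image_filter_mem vcol J hM
  have hJMinj : Set.InjOn vcol ({v ∈ J | vcol v ∈ M} : Finset V) := hJ.mono (filter_subset _ _)
  have hJMc : #{v ∈ J | vcol v ∈ M} = #M := by rw [← card_image_of_injOn hJMinj, hJM]
  have hJMW : {v ∈ J | vcol v ∈ M} ∈ (colFam W vcol lab).cross #M :=
    colFam.mem_cross.2 ⟨⟨(filter_subset _ _).trans hJW, hJMc⟩, hJMinj⟩
  have hℓ : lab {v ∈ J | vcol v ∈ M} < b #M := hJMc ▸ hlt _ (by omega) (by omega)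
  have hMJ : #M ≤ #J := (card_le_card hM).trans card_image_le
  set A := agreeing W vcol lab J 𝒰 with hA
  have hfib : ∀ I ∈ A, ({v ∈ I | vcol v ∉ M} : Finset V) ∈ W.powersetCard (#J - #M) := by
    intro I hI
    obtain ⟨⟨hIW, hIJ⟩, hIinj, hIi, -⟩ := mem_agreeing.1 hI
    refine mem_powersetCard.2 ⟨(filter_subset _ _).trans hIW, ?_⟩
    have h1 := card_filter_add_card_filter_not (s := I) (fun v => vcol v ∈ M)
    have h2 : #{v ∈ I | vcol v ∈ M} = #M := by
      rw [← card_image_of_injOn (hIinj.mono (filter_subset _ _)),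
        image_filter_mem vcol I (hIi ▸ hM)]
    omega
  have hY : ∀ Y ∈ W.powersetCard (#J - #M),
      |(#{I ∈ A | ({v ∈ I | vcol v ∉ M} : Finset V) = Y ∧
          lab {v ∈ I | vcol v ∈ M} = lab {v ∈ J | vcol v ∈ M}} : ℝ) -
        #{I ∈ A | ({v ∈ I | vcol v ∉ M} : Finset V) = Y} / b #M| ≤ δ * (#W : ℝ) ^ #M := by
    intro Y hY
    by_cases hYA : ∃ I ∈ A, ({v ∈ I | vcol v ∉ M} : Finset V) = Y
    · obtain ⟨I, hI, rfl⟩ := hYA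
      obtain ⟨⟨hIW, hIJ⟩, hIinj, hIi, -⟩ := mem_agreeing.1 hI
      obtain ⟨R, hR⟩ := exists_card_filter_agreeing_eq hlab hJ hM hM𝒰 hmax hdown
        ((filter_subset (fun v => vcol v ∉ M) I).trans hIW) (hIinj.mono (filter_subset _ _)) (by
          rw [← hIi]
          ext c
          simp only [mem_image, mem_filter, mem_sdiff]
          constructor
          · rintro ⟨v, ⟨h1, h2⟩, rfl⟩
            exact ⟨⟨v, h1, rfl⟩, h2⟩
          · rintro ⟨⟨v, h1, rfl⟩, h2⟩
            exact ⟨v, ⟨h1, h2⟩, rfl⟩)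
      have h1 := hR fun X => lab X = lab {v ∈ J | vcol v ∈ M}
      have h2 := hR fun _ => True
      simp only [and_true] at h2
      rw [hA, h1, h2]
      exact h #M hM2 hMk _ hJMW R _ hℓ
    · push Not at hYA
      rw [filter_false_of_mem fun I hI h => hYA I hI h.1, filter_false_of_mem hYA]
      simp only [card_empty, Nat.cast_zero, zero_div, sub_zero, abs_zero]
      positivity
  have hsum1 : (#(agreeing W vcol lab J (insert M 𝒰)) : ℝ) = ∑ Y ∈ W.powersetCard (#J - #M),
      (#{I ∈ A | ({v ∈ I | vcol v ∉ M} : Finset V) = Y ∧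
          lab {v ∈ I | vcol v ∈ M} = lab {v ∈ J | vcol v ∈ M}} : ℝ) := by
    rw [agreeing_insert, ← hA, card_eq_sum_card_fiberwise (t := W.powersetCard (#J - #M))
      (f := fun I => ({v ∈ I | vcol v ∉ M} : Finset V))
      (fun I hI => hfib I (mem_filter.1 (mem_coe.1 hI)).1), Nat.cast_sum]
    refine sum_congr rfl fun Y _ => ?_
    rw [filter_filter]
    simp only [and_comm]
  have hsum2 : (#A : ℝ) = ∑ Y ∈ W.powersetCard (#J - #M),
      (#{I ∈ A | ({v ∈ I | vcol v ∉ M} : Finset V) = Y} : ℝ) := by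
    rw [card_eq_sum_card_fiberwise (t := W.powersetCard (#J - #M))
      (f := fun I => ({v ∈ I | vcol v ∉ M} : Finset V)) hfib, Nat.cast_sum]
  rw [hsum1, hsum2, sum_div, ← sum_sub_distrib]
  calc _ ≤ _ := abs_sum_le_sum_abs _ _
    _ ≤ ∑ Y ∈ W.powersetCard (#J - #M), δ * (#W : ℝ) ^ #M := sum_le_sum hY
    _ = ((#W).choose (#J - #M) : ℝ) * (δ * (#W : ℝ) ^ #M) := by
      rw [sum_const, nsmul_eq_mul, card_powersetCard]
    _ ≤ (#W : ℝ) ^ (#J - #M) * (δ * (#W : ℝ) ^ #M) := by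
      gcongr
      exact_mod_cast Nat.choose_le_pow _ _
    _ = δ * (#W : ℝ) ^ #J := by
      rw [mul_left_comm, ← pow_add, Nat.sub_add_cancel hMJ]

theorem Balanced.le_card_agreeing (h : Balanced W vcol lab k b δ) (hδ : 0 ≤ δ)
    (hlab : ∀ S, #S ≤ 1 → lab S = 0) (hlt : ∀ S, 2 ≤ #S → #S ≤ k - 1 → lab S < b #S)
    {t : ℝ} (ht : 1 ≤ t) (hbt : ∀ i, 2 ≤ i → i ≤ k - 1 → (b i : ℝ) ≤ t)
    {J : Finset V} (hJW : J ⊆ W) (hJ : Set.InjOn vcol J) (𝒰 : Finset (Finset ℕ))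
    (h𝒰 : ∀ M ∈ 𝒰, M ⊆ J.image vcol ∧ 2 ≤ #M ∧ #M ≤ k - 1)
    (hdown : ∀ M ∈ 𝒰, ∀ D ⊆ M, 2 ≤ #D → D ∈ 𝒰) :
    #(agreeing W vcol lab J ∅) / t ^ #𝒰 - #𝒰 * (δ * (#W : ℝ) ^ #J) ≤
      #(agreeing W vcol lab J 𝒰) := by
  induction 𝒰 using Finset.induction_on_max_value (fun M : Finset ℕ => #M) with
  | empty => simp
  | insert M 𝒰 hM𝒰 hmax ih =>
    obtain ⟨hM, hM2, hMk⟩ := h𝒰 M (mem_insert_self _ _)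
    have h1 := ih (fun M' hM' => h𝒰 M' (mem_insert_of_mem hM')) fun M' hM' D hD hD2 => by
      refine (mem_insert.1 (hdown M' (mem_insert_of_mem hM') D hD hD2)).resolve_left ?_
      rintro rfl
      exact hM𝒰 (eq_of_subset_of_card_le hD (hmax M' hM') ▸ hM')
    have h2 := (abs_le.1 (h.abs_card_agreeing_insert_le hδ hlab hlt hJW hJ hM hM2 hMk hM𝒰 hmax
      fun D hD hDM hD2 =>
        (mem_insert.1 (hdown M (mem_insert_self _ _) D hD hD2)).resolve_left hDM)).1
    have hb : (0 : ℝ) < b #M := by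
      have hJMinj : Set.InjOn vcol ({v ∈ J | vcol v ∈ M} : Finset V) :=
        hJ.mono (filter_subset _ _)
      have hJMc : #{v ∈ J | vcol v ∈ M} = #M := by
        rw [← card_image_of_injOn hJMinj, image_filter_mem vcol J hM]
      have := hlt {v ∈ J | vcol v ∈ M} (by omega) (by omega)
      rw [hJMc] at this
      exact_mod_cast (Nat.zero_le _).trans_lt this
    have h3 : (#(agreeing W vcol lab J 𝒰) : ℝ) / t ≤ #(agreeing W vcol lab J 𝒰) / b #M :=
      div_le_div_of_nonneg_left (by positivity) hb (hbt _ hM2 hMk)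
    have h4 := div_le_div_of_nonneg_right h1 (zero_le_one.trans ht)
    rw [sub_div, div_div, ← pow_succ] at h4
    have h5 : #𝒰 * (δ * (#W : ℝ) ^ #J) / t ≤ #𝒰 * (δ * (#W : ℝ) ^ #J) :=
      div_le_self (by positivity) ht
    rw [card_insert_of_notMem hM𝒰]
    push_cast
    linarith

theorem Balanced.le_card_polyCliques (h : Balanced W vcol lab k b δ) (hδ : 0 ≤ δ)
    (hlab : ∀ S, #S ≤ 1 → lab S = 0) (hlt : ∀ S, 2 ≤ #S → #S ≤ k - 1 → lab S < b #S)
    {t : ℝ} (ht : 1 ≤ t) (hbt : ∀ i, 2 ≤ i → i ≤ k - 1 → (b i : ℝ) ≤ t) {q : ℕ}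
    (hq : ∀ v ∈ W, q ≤ #{u ∈ W | vcol u = vcol v}) {j : ℕ} (hj : 2 ≤ j) (hjk : j ≤ k)
    {J : Finset V} (hJ : J ∈ (colFam W vcol lab).cross j) :
    (q : ℝ) ^ j / t ^ 2 ^ j - 2 ^ j * (δ * (#W : ℝ) ^ j) ≤
      #((colFam W vcol lab).polyCliques j J) := by
  obtain ⟨⟨hJW, rfl⟩, hJinj⟩ := colFam.mem_cross.1 hJ
  have hC : #(J.image vcol) = #J := card_image_of_injOn hJinj
  set 𝒰 : Finset (Finset ℕ) := {M ∈ (J.image vcol).powerset | 2 ≤ #M ∧ #M < #J} with h𝒰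
  have hmem : ∀ M, M ∈ 𝒰 ↔ M ⊆ J.image vcol ∧ 2 ≤ #M ∧ #M < #J := fun M => by
    rw [h𝒰, mem_filter, mem_powerset]
  have hcard : #𝒰 ≤ 2 ^ #J := (card_filter_le _ _).trans (by rw [card_powerset, hC])
  have h1 := h.le_card_agreeing hδ hlab hlt ht hbt hJW hJinj 𝒰
    (fun M hM => by have := (hmem M).1 hM; exact ⟨this.1, this.2.1, by omega⟩)
    (fun M hM D hD hD2 => by
      have := (hmem M).1 hM
      exact (hmem D).2 ⟨hD.trans this.1, hD2, (card_le_card hD).trans_lt this.2.2⟩)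
  have h2 : agreeing W vcol lab J 𝒰 ⊆ (colFam W vcol lab).polyCliques #J J := by
    intro I hI
    obtain ⟨⟨hIW, hIJ⟩, hIinj, hIi, hI𝒰⟩ := mem_agreeing.1 hI
    refine (colFam.mem_polyCliques hlab hj hJ).2
      ⟨colFam.mem_cross.2 ⟨⟨hIW, hIJ⟩, hIinj⟩, hIi, fun M hM => ?_⟩
    have key : ∀ S : Finset V, S.image vcol = J.image vcol →
        {v ∈ S | vcol v ∈ M} = {v ∈ S | vcol v ∈ M ∩ J.image vcol} := fun S hS => by
      refine filter_congr fun v hv => ?_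
      rw [mem_inter, iff_self_and]
      exact fun _ => hS ▸ mem_image_of_mem vcol hv
    rw [key I hIi, key J rfl]
    have hlt' : #(M ∩ J.image vcol) < #J := by
      rw [← hC]
      exact card_lt_card (inter_subset_right.ssubset_of_ne fun h => hM (inter_eq_right.1 h))
    by_cases h2 : 2 ≤ #(M ∩ J.image vcol)
    · exact hI𝒰 _ ((hmem _).2 ⟨inter_subset_right, h2, hlt'⟩)
    · have hsmall : ∀ S : Finset V, Set.InjOn vcol S →
          lab {v ∈ S | vcol v ∈ M ∩ J.image vcol} = 0 := by
        intro S hS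
        refine hlab _ ?_
        rw [← card_image_of_injOn (hS.mono (filter_subset _ _))]
        refine (card_le_card (image_subset_iff.2 fun v hv => (mem_filter.1 hv).2)).trans ?_
        omega
      rw [hsmall I hIinj, hsmall J hJinj]
  have h3 : (q : ℝ) ^ #J ≤ #(agreeing W vcol lab J ∅) := by
    exact_mod_cast pow_le_card_agreeing_empty hJinj fun c hc => by
      obtain ⟨v, hv, rfl⟩ := mem_image.1 hc
      exact hq v (hJW hv)
  calc (q : ℝ) ^ #J / t ^ 2 ^ #J - 2 ^ #J * (δ * (#W : ℝ) ^ #J)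
      ≤ #(agreeing W vcol lab J ∅) / t ^ #𝒰 - #𝒰 * (δ * (#W : ℝ) ^ #J) := by
        gcongr
        exact_mod_cast hcard
    _ ≤ #(agreeing W vcol lab J 𝒰) := h1
    _ ≤ _ := by exact_mod_cast card_le_card h2

end Counting

section Labelling

/-- A labelling whose labels determine the `P`-class of a `P`-crossing set in its polyad, and
which splits the sets of `P.cross j` and of `H j` evenly. -/
structure IsRefiningLabelling {V : Type*} [DecidableEq V] (P : PartFam V) (k : ℕ) (b : ℕ → ℕ)
    (δ : ℝ) (H : ℕ → Finset (Finset V)) (lab : Finset V → ℕ) : Prop where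
  eq_zero : ∀ S, #S ≤ 1 → lab S = 0
  lt : ∀ S, 2 ≤ #S → #S ≤ k - 1 → lab S < b #S
  cls_eq : ∀ j, 2 ≤ j → j ≤ k - 1 → ∀ S ∈ P.cross j, ∀ I ∈ P.cross j,
    P.polyad (j - 1) S = P.polyad (j - 1) I → lab S = lab I → P.cls j S = P.cls j I
  balanced_cross : ∀ j, 2 ≤ j → j ≤ k - 1 → ∀ J ∈ P.cross j, ∀ R ⊆ P.polyad (j - 1) J,
    ∀ ℓ < b j, |(#{S ∈ cliqueSets (P.cross j) (j - 1) R | lab S = ℓ} : ℝ) -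
      #(cliqueSets (P.cross j) (j - 1) R) / b j| ≤ δ * (#P.gnd : ℝ) ^ j
  balanced_compl : ∀ j, 2 ≤ j → j ≤ k - 1 → ∀ R,
    ∀ ℓ < b j, |(#{S ∈ cliqueSets (H j) (j - 1) R | lab S = ℓ} : ℝ) -
      #(cliqueSets (H j) (j - 1) R) / b j| ≤ δ * (#P.gnd : ℝ) ^ j

theorem exists_isRefiningLabelling {ε : ℝ} (hε : 0 < ε) (hε1 : ε ≤ 1) (t : ℕ) :
    ∃ n₀ : ℕ, ∀ (V : Type) [DecidableEq V] (P : PartFam V) (k : ℕ) (a b : ℕ → ℕ),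
      n₀ ≤ #P.gnd → P.IsFamily k a → P.PolyadReg k a ε →
      (∀ i, 1 ≤ i → i ≤ k - 1 → 1 ≤ b i ∧ b i ≤ t) → (∀ i, 1 ≤ i → i ≤ k - 1 → a i ∣ b i) →
      ∀ H : ℕ → Finset (Finset V), (∀ j, H j ⊆ P.gnd.powersetCard j) →
        (∀ j, Disjoint (H j) (P.cross j)) →
        ∃ lab : Finset V → ℕ, IsRefiningLabelling P k b (2 * ε) H lab := by
  obtain ⟨n₀, hn₀⟩ := exists_coloring_cliqueSets hε hε1 t
  refine ⟨n₀, fun V _ P k a b hn hP hreg hb hab H hH hHP => ?_⟩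
  have hcol : ∀ (j m : ℕ) (A : Finset (Finset V)), ∃ χ : Finset V → ℕ, 2 ≤ j → 0 < m → m ≤ t →
      A ⊆ P.gnd.powersetCard j → (∀ S, χ S < m) ∧ ∀ R : Finset (Finset V), ∀ c < m,
        |(#{S ∈ cliqueSets A (j - 1) R | χ S = c} : ℝ) - #(cliqueSets A (j - 1) R) / m| ≤
          ε * (#P.gnd : ℝ) ^ j := by
    intro j m A
    by_cases h : 2 ≤ j ∧ 0 < m ∧ m ≤ t ∧ A ⊆ P.gnd.powersetCard j
    · obtain ⟨χ, hχ⟩ := hn₀ V P.gnd hn j m h.1 h.2.1 h.2.2.1 A h.2.2.2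
      exact ⟨χ, fun _ _ _ _ => hχ⟩
    · exact ⟨fun _ => 0, fun h1 h2 h3 h4 => absurd ⟨h1, h2, h3, h4⟩ h⟩
  choose χ hχ using hcol
  choose e he using fun s : Finset (Finset (Finset V)) => exists_bijOn_range s
  have ha : ∀ i, 1 ≤ i → i ≤ k - 1 → 0 < a i ∧ 0 < b i / a i ∧ b i / a i ≤ t ∧
      a i * (b i / a i) = b i := by
    intro i h1 h2
    have h3 := hb i h1 h2
    have h4 := hab i h1 h2
    have h5 := Nat.pos_of_dvd_of_pos h4 h3.1
    exact ⟨h5, Nat.div_pos (Nat.le_of_dvd h3.1 h4) h5, (Nat.div_le_self _ _).trans h3.2,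
      Nat.mul_div_cancel' h4⟩
  have hsub : ∀ j, 2 ≤ j → j ≤ k - 1 → ∀ J ∈ P.cross j, P.cls j J ⊆ P.gnd.powersetCard j :=
    fun j hj hjk J hJ S hS => mem_powersetCard.2 (PartFam.mem_cross.1
      (hP.polyCliques_subset_cross hj hjk hJ (hP.cls_subset_polyCliques hj hjk hJ hS))).1
  have hself : ∀ j, 2 ≤ j → j ≤ k - 1 → ∀ J ∈ P.cross j,
      P.cls j J ∈ (P.polyCliques j J).image (P.cls j) := fun j hj hjk J hJ =>
    mem_image_of_mem _ (hP.cls_subset_polyCliques hj hjk hJ (hP.mem_cls_self hj hjk hJ))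
  let idx : ℕ → Finset V → ℕ := fun j S => e ((P.polyCliques j S).image (P.cls j)) (P.cls j S)
  have hidx : ∀ j, 2 ≤ j → j ≤ k - 1 → ∀ J ∈ P.cross j, idx j J < a j := fun j hj hjk J hJ => by
    have := (he ((P.polyCliques j J).image (P.cls j))).mapsTo (hself j hj hjk J hJ)
    rw [hP.card_image_cls hj hjk hJ] at this
    exact mem_range.1 (mem_coe.1 this)
  let lab : Finset V → ℕ := fun S =>
    if #S ≤ 1 then 0 else if S ∈ P.cross #S then
      idx #S S * (b #S / a #S) + χ #S (b #S / a #S) (P.cls #S S) S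
    else χ #S (b #S) (H #S) S
  have hlab : ∀ j, 2 ≤ j → ∀ S ∈ P.cross j,
      lab S = idx j S * (b j / a j) + χ j (b j / a j) (P.cls j S) S := by
    intro j hj S hS
    obtain rfl := (PartFam.mem_cross.1 hS).1.2
    simp only [lab, if_neg (show ¬ #S ≤ 1 by omega), if_pos hS]
  have hlabH : ∀ j, 2 ≤ j → ∀ S ∈ H j, lab S = χ j (b j) (H j) S := by
    intro j hj S hS
    have h1 := disjoint_left.1 (hHP j) hS
    obtain rfl := (mem_powersetCard.1 (hH j hS)).2
    simp only [lab, if_neg (show ¬ #S ≤ 1 by omega), if_neg h1]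
  have hχlt : ∀ j, 2 ≤ j → j ≤ k - 1 → ∀ S ∈ P.cross j,
      χ j (b j / a j) (P.cls j S) S < b j / a j := by
    intro j hj hjk S hS
    obtain ⟨-, hm, hmt, -⟩ := ha j (by omega) hjk
    exact (hχ j _ _ hj hm hmt (hsub j hj hjk S hS)).1 S
  have hdivmod : ∀ j, 2 ≤ j → j ≤ k - 1 → ∀ S ∈ P.cross j, lab S / (b j / a j) = idx j S ∧
      lab S % (b j / a j) = χ j (b j / a j) (P.cls j S) S := by
    intro j hj hjk S hS
    have h1 := hχlt j hj hjk S hS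
    rw [hlab j hj S hS, mul_comm]
    exact ⟨by rw [Nat.mul_add_div (by omega), Nat.div_eq_of_lt h1, add_zero],
      by rw [Nat.mul_add_mod, Nat.mod_eq_of_lt h1]⟩
  refine ⟨lab, fun S hS => if_pos hS, fun S hS hSk => ?_, fun j hj hjk S hS I hI hSI h => ?_,
    fun j hj hjk J hJ R hR ℓ hℓ => ?_, fun j hj hjk R ℓ hℓ => ?_⟩
  · by_cases hSP : S ∈ P.cross #S
    · rw [hlab _ hS S hSP]
      have h1 := hχlt _ hS hSk S hSP
      have h2 := hidx _ hS hSk S hSP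
      have h3 := (ha #S (by omega) hSk).2.2.2
      calc _ < idx #S S * (b #S / a #S) + b #S / a #S := by omega
        _ = (idx #S S + 1) * (b #S / a #S) := by ring
        _ ≤ a #S * (b #S / a #S) := Nat.mul_le_mul_right _ h2
        _ = b #S := h3
    · simp only [lab, if_neg (show ¬ #S ≤ 1 by omega), if_neg hSP]
      have h1 := hb #S (by omega) hSk
      exact (hχ _ _ _ hS h1.1 h1.2 (hH _)).1 S
  · have h1 : P.polyCliques j S = P.polyCliques j I := by
      rw [PartFam.polyCliques, PartFam.polyCliques, hSI]
    have h2 : idx j S = idx j I := by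
      rw [← (hdivmod j hj hjk S hS).1, ← (hdivmod j hj hjk I hI).1, h]
    simp only [idx, h1] at h2
    exact (he _).injOn (h1 ▸ hself j hj hjk S hS) (hself j hj hjk I hI) h2
  · obtain ⟨ha0, hm, hmt, hmul⟩ := ha j (by omega) hjk
    set s := (P.polyCliques j J).image (P.cls j) with hs
    have hsc : #s = a j := hP.card_image_cls hj hjk hJ
    have hpa : ℓ / (b j / a j) < a j := (Nat.div_lt_iff_lt_mul hm).2 (by rwa [hmul])
    obtain ⟨A, hA, hAe⟩ := (he s).surjOn
      (mem_coe.2 (mem_range.2 (show ℓ / (b j / a j) < #s by rwa [hsc])))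
    obtain ⟨J₀, hJ₀, rfl⟩ := mem_image.1 (mem_coe.1 hA)
    have hJ₀c := hP.polyCliques_subset_cross hj hjk hJ hJ₀
    have hfil : {S ∈ cliqueSets (P.cross j) (j - 1) R | lab S = ℓ} =
        {S ∈ cliqueSets (P.cls j J₀) (j - 1) R |
          χ j (b j / a j) (P.cls j J₀) S = ℓ % (b j / a j)} := by
      ext S
      rw [mem_filter, mem_filter, mem_cliqueSets, mem_cliqueSets]
      have key : S ∈ P.cross j → (∀ T ∈ S.powersetCard (j - 1), T ∈ R) →
          P.cls j S ∈ s ∧ idx j S = e s (P.cls j S) := by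
        intro hS hSR
        have h1 : S ∈ P.polyCliques j J := by
          rw [hP.polyCliques_eq hj (by omega) hJ]
          exact mem_cliqueSets.2 ⟨hS, fun T hT => hR (hSR T hT)⟩
        refine ⟨mem_image_of_mem _ h1, ?_⟩
        simp only [idx, hs]
        rw [PartFam.polyCliques, hP.polyad_eq_of_mem_polyCliques hj hjk hJ h1,
          ← PartFam.polyCliques]
      constructor
      · rintro ⟨⟨hS, hSR⟩, h⟩
        obtain ⟨h1, h2⟩ := key hS hSR
        obtain ⟨h3, h4⟩ := hdivmod j hj hjk S hS
        have h5 : P.cls j S = P.cls j J₀ := (he s).injOn h1 hA (by rw [hAe, ← h2, ← h3, h])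
        rw [h5, h] at h4
        exact ⟨⟨h5 ▸ hP.mem_cls_self hj hjk hS, hSR⟩, h4.symm⟩
      · rintro ⟨⟨hS, hSR⟩, h⟩
        have h5 := hP.cls_eq hj hjk hJ₀c hS
        have hSc := hP.polyCliques_subset_cross hj hjk hJ₀c
          (hP.cls_subset_polyCliques hj hjk hJ₀c hS)
        rw [hlab j hj S hSc, (key hSc hSR).2, h5, hAe, h]
        exact ⟨⟨hSc, hSR⟩, Nat.div_add_mod' _ _⟩
    have h1 := (hχ j _ _ hj hm hmt (hsub j hj hjk J₀ hJ₀c)).2 R _ (Nat.mod_lt ℓ hm)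
    have h2 := hP.abs_card_cls_inter_le hε hreg hj hjk ha0 hJ₀c
      (hP.polyad_eq_of_mem_polyCliques hj hjk hJ hJ₀ ▸ hR)
    have h3 : P.cls j J₀ ∩ cliqueSets (P.cross j) (j - 1) R =
        cliqueSets (P.cls j J₀) (j - 1) R := by
      ext S
      rw [mem_inter, mem_cliqueSets, mem_cliqueSets]
      exact ⟨fun h => ⟨h.1, h.2.2⟩, fun h => ⟨h.1, hP.polyCliques_subset_cross hj hjk hJ₀c
        (hP.cls_subset_polyCliques hj hjk hJ₀c h.1), h.2⟩⟩
    rw [hfil]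
    rw [h3] at h2
    have hm' : (1 : ℝ) ≤ (b j / a j : ℕ) := by exact_mod_cast hm
    have hmul' : (a j : ℝ) * (b j / a j : ℕ) = b j := by exact_mod_cast hmul
    rw [← hmul', ← div_div]
    calc _ ≤ _ := abs_sub_le _ ((#(cliqueSets (P.cls j J₀) (j - 1) R) : ℝ) / (b j / a j : ℕ)) _
      _ ≤ ε * (#P.gnd : ℝ) ^ j + ε * (#P.gnd : ℝ) ^ j := by
        refine add_le_add h1 ?_
        rw [← sub_div, abs_div, abs_of_pos (zero_lt_one.trans_le hm')]
        exact (div_le_self (abs_nonneg _) hm').trans h2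
      _ = 2 * ε * (#P.gnd : ℝ) ^ j := by ring
  · have h1 := hb j (by omega) hjk
    have h2 := (hχ j _ _ hj h1.1 h1.2 (hH j)).2 R ℓ hℓ
    rw [filter_congr fun S hS => by rw [hlabH j hj S (mem_cliqueSets.1 hS).1]]
    refine h2.trans ?_
    have : 0 ≤ ε * (#P.gnd : ℝ) ^ j := by positivity
    linarith

end Labelling

section Refinement

variable {V : Type*} [DecidableEq V] {P : PartFam V} {k j : ℕ} {a b : ℕ → ℕ} {δ : ℝ}
  {vcol : V → ℕ} {lab : Finset V → ℕ} {H : ℕ → Finset (Finset V)}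

theorem cross_subset_cross_colFam
    (hvcol : ∀ u ∈ P.gnd, ∀ v ∈ P.gnd, vcol u = vcol v → P.vClass u = P.vClass v) :
    P.cross j ⊆ (colFam P.gnd vcol lab).cross j := by
  intro S hS
  rw [PartFam.mem_cross] at hS
  exact colFam.mem_cross.2 ⟨hS.1, fun u hu v hv huv =>
    hS.2 hu hv (hvcol u (hS.1.1 hu) v (hS.1.1 hv) huv)⟩

theorem image_vClass_eq_of_image_eq
    (hvcol : ∀ u ∈ P.gnd, ∀ v ∈ P.gnd, vcol u = vcol v → P.vClass u = P.vClass v)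
    {S I : Finset V} (hS : S ⊆ P.gnd) (hI : I ⊆ P.gnd) (h : S.image vcol = I.image vcol) :
    S.image P.vClass = I.image P.vClass := by
  have key : ∀ S I : Finset V, S ⊆ P.gnd → I ⊆ P.gnd → S.image vcol = I.image vcol →
      S.image P.vClass ⊆ I.image P.vClass := by
    intro S I hS hI h
    refine image_subset_iff.2 fun v hv => ?_
    obtain ⟨u, hu, huv⟩ := mem_image.1 (h ▸ mem_image_of_mem vcol hv)
    exact mem_image.2 ⟨u, hu, hvcol u (hI hu) v (hS hv) huv⟩
  exact (key S I hS hI h).antisymm (key I S hI hS h.symm)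

theorem mem_cross_of_image_eq
    (hvcol : ∀ u ∈ P.gnd, ∀ v ∈ P.gnd, vcol u = vcol v → P.vClass u = P.vClass v)
    {S I : Finset V} (hS : S ∈ (colFam P.gnd vcol lab).cross j) (hI : I ∈ P.cross j)
    (h : S.image vcol = I.image vcol) : S ∈ P.cross j := by
  have hS' := colFam.mem_cross.1 hS
  refine PartFam.mem_cross.2 ⟨hS'.1, card_image_iff.1 ?_⟩
  rw [image_vClass_eq_of_image_eq hvcol hS'.1.1 (PartFam.mem_cross.1 hI).1.1 h,
    PartFam.card_image_of_mem_cross hI, hS'.1.2]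

theorem polyad_eq_of_samePolyad
    (hlab : IsRefiningLabelling P k b δ H lab)
    (hvcol : ∀ u ∈ P.gnd, ∀ v ∈ P.gnd, vcol u = vcol v → P.vClass u = P.vClass v)
    (hj : 2 ≤ j)
    (ih : 3 ≤ j → ∀ S ∈ (colFam P.gnd vcol lab).cross (j - 1), ∀ I ∈ P.cross (j - 1),
      colAddr vcol lab S = colAddr vcol lab I → P.cls (j - 1) S = P.cls (j - 1) I)
    {S I : Finset V} (hS : S ∈ P.cross j) (hI : I ∈ P.cross j) (h : SamePolyad vcol lab S I) :
    P.polyad (j - 1) S = P.polyad (j - 1) I := by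
  rcases hj.eq_or_lt with rfl | hj3
  · simp only [Nat.add_one_sub_one, PartFam.polyad_one]
    have h1 := image_vClass_eq_of_image_eq hvcol (PartFam.mem_cross.1 hS).1.1
      (PartFam.mem_cross.1 hI).1.1 h.1
    rw [← Function.id_comp P.vClass, ← sup_image, h1, sup_image]
  · have key : ∀ S ∈ P.cross j, ∀ I ∈ P.cross j, SamePolyad vcol lab S I →
        P.polyad (j - 1) S ⊆ P.polyad (j - 1) I := by
      intro S hS I hI h T₀ hT₀
      rw [PartFam.mem_polyad (by omega)] at hT₀ ⊢
      obtain ⟨T, hT, hT₀⟩ := hT₀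
      obtain ⟨hTc, T', hT', hTT'⟩ := (colFam.mem_polyad hlab.eq_zero).1
        ((colFam.forall_mem_polyad_iff hlab.eq_zero hj (cross_subset_cross_colFam hvcol hS)
          (cross_subset_cross_colFam hvcol hI)).2 h T hT)
      have hT'' := mem_powersetCard.1 hT'
      exact ⟨T', hT', ih hj3 T hTc T' (PartFam.mem_cross_of_subset hI hT''.1 hT''.2) hTT' ▸ hT₀⟩
    exact (key S hS I hI h).antisymm (key I hI S hS h.symm)

theorem cls_eq_of_colAddr_eq
    (hlab : IsRefiningLabelling P k b δ H lab)
    (hvcol : ∀ u ∈ P.gnd, ∀ v ∈ P.gnd, vcol u = vcol v → P.vClass u = P.vClass v)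
    (hj : 2 ≤ j) (hjk : j ≤ k - 1) {S I : Finset V}
    (hS : S ∈ (colFam P.gnd vcol lab).cross j) (hI : I ∈ P.cross j)
    (h : colAddr vcol lab S = colAddr vcol lab I) : P.cls j S = P.cls j I := by
  induction j, hj using Nat.le_induction generalizing S I with
  | base =>
    have hSI := colAddr_eq_iff.1 h
    have hSc := mem_cross_of_image_eq hvcol hS hI hSI.1.1
    have hpoly := polyad_eq_of_samePolyad (j := 2) hlab hvcol le_rfl
      (fun h => absurd h (by omega)) hSc hI hSI.1
    exact hlab.cls_eq 2 le_rfl hjk S hSc I hI hpoly hSI.2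
  | succ j hj ih =>
    have hSI := colAddr_eq_iff.1 h
    have hSc := mem_cross_of_image_eq hvcol hS hI hSI.1.1
    have hpoly := polyad_eq_of_samePolyad (j := j + 1) hlab hvcol (by omega)
      (fun _ S hS I hI h => ih (by omega) hS hI h) hSc hI hSI.1
    exact hlab.cls_eq (j + 1) (by omega) hjk S hSc I hI hpoly hSI.2

theorem polyad_colFam_subset
    (hlab : IsRefiningLabelling P k b δ H lab)
    (hvcol : ∀ u ∈ P.gnd, ∀ v ∈ P.gnd, vcol u = vcol v → P.vClass u = P.vClass v)
    (hP : P.IsFamily k a) (hj : 2 ≤ j) (hjk : j ≤ k - 1) {J : Finset V}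
    (hJ : J ∈ P.cross j) : (colFam P.gnd vcol lab).polyad (j - 1) J ⊆ P.polyad (j - 1) J := by
  intro T hT
  obtain ⟨hTc, T', hT', h⟩ := (colFam.mem_polyad hlab.eq_zero).1 hT
  have hT'' := mem_powersetCard.1 hT'
  have hT'c := PartFam.mem_cross_of_subset hJ hT''.1 hT''.2
  have himg := (colAddr_eq_iff.1 h).1.1
  rcases hj.eq_or_lt with rfl | hj3
  · obtain ⟨⟨hTg, hT1⟩, -⟩ := colFam.mem_cross.1 hTc
    obtain ⟨v, rfl⟩ := card_eq_one.1 hT1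
    obtain ⟨u, rfl⟩ := card_eq_one.1 hT''.2
    simp only [image_singleton, singleton_inj] at himg
    have hv := singleton_subset_iff.1 hTg
    have hu := singleton_subset_iff.1 hT''.1
    have hug := (PartFam.mem_cross.1 hJ).1.1 hu
    simp only [Nat.add_one_sub_one, PartFam.polyad_one]
    exact mem_sing.2 ⟨v, mem_sup.2 ⟨u, hu,
      (hP.mem_vClass_iff hug hv).2 (hvcol v hv u hug himg)⟩, rfl⟩
  · rw [PartFam.mem_polyad (by omega)]
    refine ⟨T', hT', ?_⟩
    rw [← cls_eq_of_colAddr_eq hlab hvcol (by omega) (by omega) hTc hT'c h]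
    exact hP.mem_cls_self (by omega) (by omega) (mem_cross_of_image_eq hvcol hTc hT'c himg)

open scoped Classical in
theorem balanced_of_isRefiningLabelling
    (hlab : IsRefiningLabelling P k b δ H lab)
    (hvcol : ∀ u ∈ P.gnd, ∀ v ∈ P.gnd, vcol u = vcol v → P.vClass u = P.vClass v)
    (hP : P.IsFamily k a)
    (hH : ∀ j S, S ∈ H j ↔ S ∈ (colFam P.gnd vcol lab).cross j ∧ S ∉ P.cross j) :
    Balanced P.gnd vcol lab k b δ := by
  intro j hj hjk J hJ R ℓ hℓ
  set Q := colFam P.gnd vcol lab with hQ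
  have hG : ∀ S, S ∈ cliqueSets (Q.cross j) (j - 1) R ∧ SamePolyad vcol lab S J ↔
      S ∈ cliqueSets (Q.cross j) (j - 1) (R ∩ Q.polyad (j - 1) J) := by
    intro S
    rw [mem_cliqueSets, mem_cliqueSets]
    constructor
    · rintro ⟨⟨h1, h2⟩, h3⟩
      exact ⟨h1, fun T hT => mem_inter.2
        ⟨h2 T hT, (colFam.forall_mem_polyad_iff hlab.eq_zero hj h1 hJ).2 h3 T hT⟩⟩
    · rintro ⟨h1, h2⟩
      exact ⟨⟨h1, fun T hT => (mem_inter.1 (h2 T hT)).1⟩,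
        (colFam.forall_mem_polyad_iff hlab.eq_zero hj h1 hJ).1
          fun T hT => (mem_inter.1 (h2 T hT)).2⟩
  have hG1 : {S ∈ cliqueSets (Q.cross j) (j - 1) R | SamePolyad vcol lab S J} =
      cliqueSets (Q.cross j) (j - 1) (R ∩ Q.polyad (j - 1) J) := by
    ext S
    rw [mem_filter, hG]
  have hG2 : {S ∈ cliqueSets (Q.cross j) (j - 1) R | SamePolyad vcol lab S J ∧ lab S = ℓ} =
      {S ∈ cliqueSets (Q.cross j) (j - 1) (R ∩ Q.polyad (j - 1) J) | lab S = ℓ} := by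
    rw [← hG1, filter_filter]
  rw [hG1, hG2]
  by_cases hJP : J ∈ P.cross j
  · have h1 : cliqueSets (Q.cross j) (j - 1) (R ∩ Q.polyad (j - 1) J) =
        cliqueSets (P.cross j) (j - 1) (R ∩ Q.polyad (j - 1) J) := by
      ext S
      constructor
      · intro hS
        have h2 := mem_cliqueSets.1 hS
        exact mem_cliqueSets.2
          ⟨mem_cross_of_image_eq hvcol h2.1 hJP ((hG S).2 hS).2.1, h2.2⟩
      · intro hS
        have h2 := mem_cliqueSets.1 hS
        exact mem_cliqueSets.2 ⟨cross_subset_cross_colFam hvcol h2.1, h2.2⟩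
    rw [h1]
    exact hlab.balanced_cross j hj hjk J hJP _
      (inter_subset_right.trans (polyad_colFam_subset hlab hvcol hP hj hjk hJP)) ℓ hℓ
  · have h1 : cliqueSets (Q.cross j) (j - 1) (R ∩ Q.polyad (j - 1) J) =
        cliqueSets (H j) (j - 1) (R ∩ Q.polyad (j - 1) J) := by
      ext S
      constructor
      · intro hS
        have h2 := mem_cliqueSets.1 hS
        exact mem_cliqueSets.2 ⟨(hH j S).2 ⟨h2.1, fun h =>
          hJP (mem_cross_of_image_eq hvcol hJ h ((hG S).2 hS).2.1.symm)⟩, h2.2⟩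
      · intro hS
        have h2 := mem_cliqueSets.1 hS
        exact mem_cliqueSets.2 ⟨((hH j S).1 h2.1).1, h2.2⟩
    rw [h1]
    exact hlab.balanced_compl j hj hjk _ ℓ hℓ

theorem refinesAt_colFam
    (hlab : IsRefiningLabelling P k b δ H lab)
    (hvcol : ∀ u ∈ P.gnd, ∀ v ∈ P.gnd, vcol u = vcol v → P.vClass u = P.vClass v)
    (hP : P.IsFamily k a) (hj : 1 ≤ j) (hjk : j ≤ k - 1) :
    RefinesAt (colFam P.gnd vcol lab) P j := by
  rw [RefinesAt]
  split_ifs with h1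
  · intro v hv u hu
    obtain ⟨hu, huv⟩ := mem_filter.1 hu
    exact (hP.mem_vClass_iff hv hu).2 (hvcol u hu v hv huv)
  · intro I hI
    by_cases hIP : I ∈ P.cross j
    · refine Or.inl ⟨I, hIP, fun S hS => ?_⟩
      obtain ⟨hS, hSI⟩ := colFam.mem_cls.1 hS
      rw [← cls_eq_of_colAddr_eq hlab hvcol (by omega) hjk hS hIP hSI]
      exact hP.mem_cls_self (by omega) hjk
        (mem_cross_of_image_eq hvcol hS hIP (colAddr_eq_iff.1 hSI).1.1)
    · refine Or.inr fun S hS hSP => hIP ?_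
      exact mem_cross_of_image_eq hvcol hI hSP
        (colAddr_eq_iff.1 (colFam.mem_cls.1 hS).2).1.1.symm

end Refinement

section Regularity

variable {V : Type*} [DecidableEq V] {W : Finset V} {vcol : V → ℕ} {lab : Finset V → ℕ}
  {k : ℕ} {b : ℕ → ℕ} {δ ε : ℝ}

open scoped Classical in
theorem Balanced.polyadReg (hbal : Balanced W vcol lab k b δ) (hlab : ∀ S, #S ≤ 1 → lab S = 0)
    (hlt : ∀ S, 2 ≤ #S → #S ≤ k - 1 → lab S < b #S)
    (hF : (colFam W vcol lab).IsFamily k b) (hε : 0 ≤ ε)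
    (hcard : ∀ j, 2 ≤ j → j ≤ k - 1 → ∀ J ∈ (colFam W vcol lab).cross j,
      δ * (#W : ℝ) ^ j ≤ ε * (ε * #((colFam W vcol lab).polyCliques j J))) :
    (colFam W vcol lab).PolyadReg k b ε := by
  intro K hK j hj hjk J hJ
  set Q := colFam W vcol lab with hQ
  have hJ' := mem_powersetCard.1 hJ
  have hJc : J ∈ Q.cross j := PartFam.mem_cross_of_subset hK hJ'.1 hJ'.2
  have hj1 : j - 1 + 1 = j := by omega
  rw [RegPairC, hj1]
  intro R hR hbig
  rw [PartFam.KsetC_eq_cliqueSets hj (hR.trans (colFam.polyad_subset_cross hlab))] at hbig ⊢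
  set G := cliqueSets (Q.cross j) (j - 1) R with hG
  have hsub : ∀ S ∈ G, S ∈ Q.cross j ∧ SamePolyad vcol lab S J := by
    intro S hS
    have h := mem_cliqueSets.1 hS
    exact ⟨h.1, (colFam.forall_mem_polyad_iff hlab hj h.1 hJc).1 fun T hT => hR (h.2 T hT)⟩
  have hpart : Q.polyad j K ∩ G = {S ∈ G | SamePolyad vcol lab S J ∧ lab S = lab J} := by
    ext S
    rw [mem_inter, mem_filter, and_comm]
    refine and_congr_right fun hS => ?_
    have hS' := hsub S hS
    rw [hF.mem_polyad_iff_mem_cls hj hjk hK hJ ((colFam.mem_polyCliques hlab hj hJc).2 hS'),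
      colFam.mem_cls, colAddr_eq_iff]
    exact and_iff_right hS'.1
  have hall : {S ∈ G | SamePolyad vcol lab S J} = G :=
    filter_true_of_mem fun S hS => (hsub S hS).2
  have h := hbal j hj hjk J hJc R (lab J) (hJ'.2 ▸ hlt J (hJ'.2 ▸ hj) (hJ'.2 ▸ hjk))
  rw [hall] at h
  rw [hpart, one_div_mul_eq_div]
  exact h.trans ((hcard j hj hjk J hJc).trans (mul_le_mul_of_nonneg_left hbig hε))

open scoped Classical in
theorem Balanced.image_polyCliques_eq_range (hbal : Balanced W vcol lab k b δ)
    (hlab : ∀ S, #S ≤ 1 → lab S = 0) (hlt : ∀ S, 2 ≤ #S → #S ≤ k - 1 → lab S < b #S)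
    {j : ℕ} (hj : 2 ≤ j) (hjk : j ≤ k - 1) {J : Finset V}
    (hJ : J ∈ (colFam W vcol lab).cross j)
    (hcard : δ * (#W : ℝ) ^ j < #((colFam W vcol lab).polyCliques j J) / b j) :
    ((colFam W vcol lab).polyCliques j J).image lab = range (b j) := by
  set Q := colFam W vcol lab with hQ
  have hmem : ∀ {S}, S ∈ Q.polyCliques j J ↔ S ∈ Q.cross j ∧ SamePolyad vcol lab S J :=
    colFam.mem_polyCliques hlab hj hJ
  refine Subset.antisymm (image_subset_iff.2 fun S hS => mem_range.2 ?_) fun ℓ hℓ => ?_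
  · have hS' := (colFam.mem_cross.1 (hmem.1 hS).1).1.2
    exact hS' ▸ hlt S (hS' ▸ hj) (hS' ▸ hjk)
  · have hG : {S ∈ cliqueSets (Q.cross j) (j - 1) (Q.polyad (j - 1) J) |
        SamePolyad vcol lab S J} = Q.polyCliques j J := by
      ext S
      rw [mem_filter, mem_cliqueSets, hmem]
      constructor
      · exact fun h => ⟨h.1.1, h.2⟩
      · exact fun h => ⟨⟨h.1, (colFam.forall_mem_polyad_iff hlab hj h.1 hJ).2 h.2⟩, h.2⟩
    have h := hbal j hj hjk J hJ (Q.polyad (j - 1) J) ℓ (mem_range.1 hℓ)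
    rw [hG, ← filter_filter, hG] at h
    have hpos : 0 < #{S ∈ Q.polyCliques j J | lab S = ℓ} := by
      have := (abs_le.1 h).1
      exact_mod_cast (by linarith : (0 : ℝ) < #{S ∈ Q.polyCliques j J | lab S = ℓ})
    obtain ⟨S, hS⟩ := card_pos.1 hpos
    exact mem_image.2 ⟨S, (mem_filter.1 hS).1, (mem_filter.1 hS).2⟩

end Regularity

theorem PartFam.IsFamily.exists_vertex_coloring {V : Type*} [DecidableEq V] {P : PartFam V} {k : ℕ}
    {a b : ℕ → ℕ} (hP : P.IsFamily k a)
    (hsz : ∀ v ∈ P.gnd, #(P.vClass v) = #P.gnd / a 1 ∨ #(P.vClass v) = #P.gnd / a 1 + 1)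
    (hb : 0 < b 1) (hab : a 1 ∣ b 1) :
    ∃ vcol : V → ℕ, (∀ v, v ∈ P.gnd → vcol v < b 1) ∧
      (∀ u ∈ P.gnd, ∀ v ∈ P.gnd, vcol u = vcol v → P.vClass u = P.vClass v) ∧
      ∀ c < b 1, #{u ∈ P.gnd | vcol u = c} = #P.gnd / b 1 ∨
        #{u ∈ P.gnd | vcol u = c} = #P.gnd / b 1 + 1 := by
  refine exists_equitable_refinement P.gnd P.vClass hab hb hP.2.2.2.1 fun y hy => ?_
  obtain ⟨v, hv, rfl⟩ := mem_image.1 hy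
  have h : {u ∈ P.gnd | P.vClass u = P.vClass v} = P.vClass v := by
    ext u
    rw [mem_filter]
    constructor
    · exact fun h => h.2 ▸ hP.1 u h.1
    · exact fun h => ⟨hP.2.1 v hv h, hP.2.2.1 u (hP.2.1 v hv h) v hv h⟩
  rw [h]
  exact hsz v hv

/-- A lower bound for the density of the clique set of a polyad. -/
noncomputable def cliqueDensity (k t : ℕ) : ℝ := (1 / (2 * (t : ℝ))) ^ k / (t : ℝ) ^ 2 ^ k / 2

theorem cliqueDensity_pos {t : ℕ} (k : ℕ) (ht : 1 ≤ t) : 0 < cliqueDensity k t := by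
  have : (1 : ℝ) ≤ t := by exact_mod_cast ht
  rw [cliqueDensity]
  positivity

theorem cliqueDensity_le_one {t : ℕ} (k : ℕ) (ht : 1 ≤ t) : cliqueDensity k t ≤ 1 := by
  have ht' : (1 : ℝ) ≤ t := by exact_mod_cast ht
  have h1 : (1 / (2 * (t : ℝ))) ^ k ≤ 1 :=
    pow_le_one₀ (by positivity) ((div_le_one (by positivity)).2 (by linarith))
  have h2 : (1 / (2 * (t : ℝ))) ^ k / (t : ℝ) ^ 2 ^ k ≤ 1 :=
    div_le_one_of_le₀ (h1.trans (one_le_pow₀ ht')) (by positivity)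
  rw [cliqueDensity]
  linarith

theorem two_mul_cliqueDensity_mul_pow_le {k t j : ℕ} {n q : ℝ} (ht : 1 ≤ t) (hn : 0 ≤ n)
    (hq : n / (2 * t) ≤ q) (hjk : j ≤ k) :
    2 * cliqueDensity k t * n ^ j ≤ q ^ j / (t : ℝ) ^ 2 ^ j := by
  have ht' : (1 : ℝ) ≤ t := by exact_mod_cast ht
  calc 2 * cliqueDensity k t * n ^ j
      = n ^ j * (1 / (2 * (t : ℝ))) ^ k / (t : ℝ) ^ 2 ^ k := by rw [cliqueDensity]; ring
    _ ≤ n ^ j * (1 / (2 * (t : ℝ))) ^ j / (t : ℝ) ^ 2 ^ j := by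
        gcongr ?_ * ?_ / ?_
        · exact pow_le_pow_of_le_one (by positivity)
            ((div_le_one (by positivity)).2 (by linarith)) hjk
        · exact pow_le_pow_right₀ ht' (Nat.pow_le_pow_right (by norm_num) hjk)
    _ = (n / (2 * t)) ^ j / (t : ℝ) ^ 2 ^ j := by rw [← mul_pow, mul_one_div]
    _ ≤ q ^ j / (t : ℝ) ^ 2 ^ j := by gcongr

theorem div_two_mul_le_natDiv {n m t : ℕ} (hm : 0 < m) (hmt : m ≤ t) (hn : 2 * t ≤ n) :
    (n : ℝ) / (2 * t) ≤ (n / m : ℕ) := by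
  have ht : (0 : ℝ) < t := by exact_mod_cast hm.trans_le hmt
  have h1 : n ≤ 2 * t * (n / m) := by
    have h2 := Nat.lt_mul_div_succ n hm
    have h3 := Nat.mul_le_mul_right (n / m + 1) hmt
    nlinarith
  rw [div_le_iff₀ (by positivity), mul_comm]
  exact_mod_cast h1

theorem Balanced.cliqueDensity_mul_pow_le {V : Type*} [DecidableEq V] {W : Finset V}
    {vcol : V → ℕ} {lab : Finset V → ℕ} {k t : ℕ} {b : ℕ → ℕ} {δ : ℝ}
    (hbal : Balanced W vcol lab k b δ) (hδ : 0 ≤ δ) (hδk : 2 ^ k * δ ≤ cliqueDensity k t)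
    (hlab : ∀ S, #S ≤ 1 → lab S = 0) (hlt : ∀ S, 2 ≤ #S → #S ≤ k - 1 → lab S < b #S)
    (ht : 1 ≤ t) (hbt : ∀ i, 2 ≤ i → i ≤ k - 1 → b i ≤ t) {q : ℕ}
    (hq : ∀ v ∈ W, q ≤ #{u ∈ W | vcol u = vcol v}) (hWq : (#W : ℝ) / (2 * t) ≤ q)
    {j : ℕ} (hj : 2 ≤ j) (hjk : j ≤ k) {J : Finset V} (hJ : J ∈ (colFam W vcol lab).cross j) :
    cliqueDensity k t * (#W : ℝ) ^ j ≤ #((colFam W vcol lab).polyCliques j J) := by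
  have h := hbal.le_card_polyCliques hδ hlab hlt (t := t) (by exact_mod_cast ht)
    (fun i hi hik => by exact_mod_cast hbt i hi hik) hq hj hjk hJ
  have h1 := two_mul_cliqueDensity_mul_pow_le ht (Nat.cast_nonneg #W) hWq hjk
  have h2 : 2 ^ j * (δ * (#W : ℝ) ^ j) ≤ cliqueDensity k t * (#W : ℝ) ^ j := by
    rw [← mul_assoc]
    refine mul_le_mul_of_nonneg_right (le_trans ?_ hδk) (by positivity)
    exact mul_le_mul_of_nonneg_right (pow_le_pow_right₀ (by norm_num) hjk) hδ
  linarith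

theorem exists_refinement {V : Type*} [DecidableEq V] {P : PartFam V} {k t : ℕ} {a b : ℕ → ℕ}
    {δ ε η : ℝ} (hk : 2 ≤ k) (hP : P.IsFamily k a) (hη : 0 < η) (ha : 1 ≤ η * (a 1 : ℝ))
    {vcol : V → ℕ} {lab : Finset V → ℕ} {H : ℕ → Finset (Finset V)}
    (hlab : IsRefiningLabelling P k b δ H lab)
    (hH : ∀ j S, S ∈ H j ↔ S ∈ (colFam P.gnd vcol lab).cross j ∧ S ∉ P.cross j)
    (hvlt : ∀ v, v ∈ P.gnd → vcol v < b 1)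
    (hvcol : ∀ u ∈ P.gnd, ∀ v ∈ P.gnd, vcol u = vcol v → P.vClass u = P.vClass v)
    (hvsz : ∀ c < b 1, #{u ∈ P.gnd | vcol u = c} = #P.gnd / b 1 ∨
      #{u ∈ P.gnd | vcol u = c} = #P.gnd / b 1 + 1)
    (hb : ∀ i, 1 ≤ i → i ≤ k - 1 → 1 ≤ b i ∧ b i ≤ t) (hab : a 1 ≤ b 1)
    (hn : 2 * t ≤ #P.gnd) (hδ : 0 ≤ δ) (hδk : 2 ^ k * δ ≤ cliqueDensity k t)
    (hδt : t * δ < cliqueDensity k t) (hε : 0 ≤ ε) (hδε : δ ≤ ε * (ε * cliqueDensity k t)) :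
    ∃ Q : PartFam V, Q.gnd = P.gnd ∧ Q.IsFamily k b ∧ Q.IsEquitableE k b η ε ∧
      ∀ j, 1 ≤ j → j ≤ k - 1 → RefinesAt Q P j := by
  obtain ⟨hb1, hbt1⟩ := hb 1 le_rfl (by omega)
  have hn0 : (0 : ℝ) < #P.gnd := by
    have : 0 < #P.gnd := by omega
    exact_mod_cast this
  have hbal := balanced_of_isRefiningLabelling hlab hvcol hP hH
  have hcard : ∀ j, 2 ≤ j → j ≤ k - 1 → ∀ J ∈ (colFam P.gnd vcol lab).cross j,
      cliqueDensity k t * (#P.gnd : ℝ) ^ j ≤ #((colFam P.gnd vcol lab).polyCliques j J) :=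
    fun j hj hjk J hJ => hbal.cliqueDensity_mul_pow_le hδ hδk hlab.eq_zero hlab.lt
      (hb1.trans hbt1) (fun i hi hik => (hb i (by omega) hik).2)
      (fun v hv => by rcases hvsz _ (hvlt v hv) with h | h <;> omega)
      (div_two_mul_le_natDiv hb1 hbt1 hn) hj (by omega) hJ
  have hcol : P.gnd.image vcol = range (b 1) := by
    refine Subset.antisymm (image_subset_iff.2 fun v hv => mem_range.2 (hvlt v hv))
      fun c hc => ?_
    have hq : 0 < #P.gnd / b 1 := Nat.div_pos (by omega) hb1
    obtain ⟨v, hv⟩ := card_pos.1 (show 0 < #{u ∈ P.gnd | vcol u = c} by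
      rcases hvsz c (mem_range.1 hc) with h | h <;> omega)
    exact mem_image.2 ⟨v, (mem_filter.1 hv).1, (mem_filter.1 hv).2⟩
  have hF : (colFam P.gnd vcol lab).IsFamily k b := by
    refine colFam.isFamily hlab.eq_zero (hP.2.2.2.2.1.trans hab) hcol fun j hj hjk J hJ =>
      hbal.image_polyCliques_eq_range hlab.eq_zero hlab.lt hj hjk hJ ?_
    obtain ⟨hbj, hbtj⟩ := hb j (by omega) hjk
    rw [lt_div_iff₀ (by exact_mod_cast hbj)]
    refine lt_of_lt_of_le ?_ (hcard j hj hjk J hJ)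
    calc δ * (#P.gnd : ℝ) ^ j * b j ≤ δ * (#P.gnd : ℝ) ^ j * t := by gcongr
      _ = t * δ * (#P.gnd : ℝ) ^ j := by ring
      _ < cliqueDensity k t * (#P.gnd : ℝ) ^ j := mul_lt_mul_of_pos_right hδt (by positivity)
  refine ⟨colFam P.gnd vcol lab, rfl, hF, ⟨?_, fun v hv => ?_, ?_⟩,
    fun j hj hjk => refinesAt_colFam hlab hvcol hP hj hjk⟩
  · exact ha.trans (mul_le_mul_of_nonneg_left (by exact_mod_cast hab) hη.le)
  · have hv' : (colFam P.gnd vcol lab).vClass v = {u ∈ P.gnd | vcol u = vcol v} := by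
      ext u
      rw [mem_filter]
      exact mem_filter
    rw [hv']
    exact hvsz _ (hvlt v hv)
  · refine hbal.polyadReg hlab.eq_zero hlab.lt hF hε fun j hj hjk J hJ => ?_
    calc δ * (#P.gnd : ℝ) ^ j ≤ ε * (ε * cliqueDensity k t) * (#P.gnd : ℝ) ^ j := by gcongr
      _ = ε * (ε * (cliqueDensity k t * (#P.gnd : ℝ) ^ j)) := by ring
      _ ≤ _ := by
        have := hcard j hj hjk J hJ
        gcongr

/-- Refining an equitable family of partitions into one with class vector `b`. -/
theorem family_refinement :
    ∀ k t : ℕ, 2 ≤ k → 2 ≤ t → ∃ ε₀ : ℝ, 0 < ε₀ ∧ ∀ ε : ℝ, 0 < ε → ε ≤ ε₀ →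
    ∃ n₀ : ℕ, ∀ (V : Type) [DecidableEq V], ∀ (W : Finset V) (n : ℕ),
    W.card = n → n₀ ≤ n →
    ∀ η : ℝ, 0 < η → η < 1 →
    ∀ (a b : ℕ → ℕ) (P : PartFam V), P.gnd = W →
    P.IsFamily k a → P.IsEquitableE k a η ε →
    (∀ i, 1 ≤ i → i ≤ k - 1 → 1 ≤ b i ∧ b i ≤ t) →
    (∀ i, 1 ≤ i → i ≤ k - 1 → a i ∣ b i) →
    ∃ Q : PartFam V, Q.gnd = W ∧ Q.IsFamily k b ∧
      Q.IsEquitableE k b η (ε ^ ((1 : ℝ)/3)) ∧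
      ∀ j, 1 ≤ j → j ≤ k - 1 → RefinesAt Q P j := by
  intro k t hk ht
  have ht' : (2 : ℝ) ≤ t := by exact_mod_cast ht
  have hc0 := cliqueDensity_pos k (show 1 ≤ t by omega)
  have hc1 := cliqueDensity_le_one k (show 1 ≤ t by omega)
  set c := cliqueDensity k t with hc
  have hk2 : (1 : ℝ) ≤ 2 ^ k := one_le_pow₀ (by norm_num)
  have hM : (1 : ℝ) ≤ 2 ^ k * t := one_le_mul_of_one_le_of_one_le hk2 (by linarith)
  refine ⟨(c / (4 * (2 ^ k * t))) ^ 3, by positivity, fun ε hε hεle => ?_⟩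
  set x := ε ^ ((1 : ℝ) / 3) with hx
  have hx0 : 0 < x := Real.rpow_pos_of_pos hε _
  have hx3 : x ^ 3 = ε := by
    rw [hx, ← Real.rpow_natCast, ← Real.rpow_mul hε.le]
    norm_num
  have hxle : x * (4 * (2 ^ k * t)) ≤ c := by
    rw [← le_div_iff₀ (by positivity)]
    exact le_of_pow_le_pow_left₀ (by norm_num) (by positivity) (hx3 ▸ hεle)
  have hx1 : 4 * x ≤ c := by nlinarith
  have hεx : ε ≤ x * (x / 4) := by
    rw [← hx3]
    nlinarith [mul_pos hx0 hx0]
  have hεx' : ε ≤ x := by nlinarith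
  have hεM : 4 * (ε * (2 ^ k * t)) ≤ c := by nlinarith
  obtain ⟨n₁, hn₁⟩ := exists_isRefiningLabelling hε (by linarith) t
  refine ⟨max n₁ (2 * t), ?_⟩
  intro V _ W n hn hn₀ η hη _ a b P hPW hP hE hb hab
  subst hn hPW
  obtain ⟨vcol, hvlt, hvcol, hvsz⟩ := hP.exists_vertex_coloring hE.2.1
    (hb 1 le_rfl (by omega)).1 (hab 1 le_rfl (by omega))
  obtain ⟨lab, hlab⟩ := hn₁ V P k a b ((le_max_left _ _).trans hn₀) hP hE.2.2 hb hab
    (fun j => (colFam P.gnd vcol fun _ => 0).cross j \ P.cross j)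
    (fun j S hS => mem_powersetCard.2 (colFam.mem_cross.1 (mem_sdiff.1 hS).1).1)
    fun j => sdiff_disjoint
  have h1 : ε * 2 ^ k ≤ ε * (2 ^ k * t) := by
    gcongr
    exact le_mul_of_one_le_right (by positivity) (by linarith)
  have h2 : ε * t ≤ ε * (2 ^ k * t) := by
    gcongr
    exact le_mul_of_one_le_left (by positivity) hk2
  refine exists_refinement (t := t) hk hP hη hE.1 hlab (fun j S => ?_) hvlt hvcol hvsz hb
    (Nat.le_of_dvd (hb 1 le_rfl (by omega)).1 (hab 1 le_rfl (by omega)))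
    ((le_max_right _ _).trans hn₀) (by positivity) ?_ ?_ hx0.le ?_
  · rw [mem_sdiff, colFam.mem_cross, colFam.mem_cross]
  · linarith
  · linarith
  · rw [← hc, ← hx3]
    nlinarith [mul_pos hx0 hx0]

end HypReg
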